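/- arXiv:2103.04720 — 2 statements merged into one kernel-verified Lean document; each statement's English description precedes it below -/
import Mathlib

section
/- Let f ∈ W^{1,1}(R^n) and α > 0. Let E be the set of points x where the limit f*(x) = lim_{ρ→0+} f_{B(x,ρ)} fails to exist, and let R_α = {x : sup_{ρ>0} |∇f|_{B(x,ρ)} ≤ α}. Then f* is Lipschitz continuous on R_α \ E with Lipschitz constant at most C(n) · α, where C(n) depends only on n; that is, |f*(x) - f*(y)| ≤ C(n) α |x - y| for all x, y ∈ R_α \ E. -/
open MeasureTheory Metric Filter Set
open scoped ENNReal Topology NNReal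

noncomputable section

/-- Euclidean space ℝⁿ. -/
abbrev En (n : ℕ) := EuclideanSpace ℝ (Fin n)

variable {n : ℕ}

/-- The average of `f` over the ball `B(x,r)`. -/
def ballAvg (f : En n → ℝ) (x : En n) (r : ℝ) : ℝ :=
  ⨍ y in Metric.ball x r, f y

open scoped Classical in
/-- The precise representative of `f`: the limit of ball averages where it exists, `0` otherwise. -/
def preciseRep (f : En n → ℝ) (x : En n) : ℝ :=
  if h : ∃ L : ℝ, Tendsto (fun r => ballAvg f x r) (nhdsWithin 0 (Set.Ioi 0)) (nhds L)
  then h.choose else 0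

/-- A test function: smooth, compactly supported, with support inside `Ω`. -/
def IsTest (Ω : Set (En n)) (η : En n → ℝ) : Prop :=
  ContDiff ℝ (⊤ : ℕ∞) η ∧ HasCompactSupport η ∧ tsupport η ⊆ Ω

/-- `g` is the weak partial derivative of `f` in direction `v`, on `Ω`. -/
def HasWeakPartialOn (Ω : Set (En n)) (f g : En n → ℝ) (v : En n) : Prop :=
  ∀ η : En n → ℝ, IsTest Ω η →
    ∫ x, f x * fderiv ℝ η x v = - ∫ x, g x * η x

/-- `g` is the weak gradient of `f` on `Ω`. -/
def HasWeakGradientOn (Ω : Set (En n)) (f : En n → ℝ) (g : En n → En n) : Prop :=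
  ∀ i : Fin n, HasWeakPartialOn Ω f (fun x => g x i) (EuclideanSpace.single i 1)

/-- `f ∈ W^{1,p}(ℝⁿ)` with weak gradient `g`. -/
def MemW1p (p : ℝ) (f : En n → ℝ) (g : En n → En n) : Prop :=
  AEStronglyMeasurable f volume ∧ AEStronglyMeasurable g volume ∧
  HasWeakGradientOn Set.univ f g ∧
  Integrable (fun x => |f x| ^ p) ∧ Integrable (fun x => ‖g x‖ ^ p)

/-- `f ∈ W^{1,p}_loc(Ω)` with weak gradient `g`. -/
def MemW1pLoc (p : ℝ) (Ω : Set (En n)) (f : En n → ℝ) (g : En n → En n) : Prop :=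
  AEStronglyMeasurable f volume ∧ AEStronglyMeasurable g volume ∧
  HasWeakGradientOn Ω f g ∧
  ∀ K : Set (En n), K ⊆ Ω → IsCompact K →
    IntegrableOn (fun x => |f x| ^ p) K ∧ IntegrableOn (fun x => ‖g x‖ ^ p) K

/-- `f ∈ W^{2,p}_loc(Ω)` with weak gradient `g` and weak second derivatives `h`. -/
def MemW2pLoc (p : ℝ) (Ω : Set (En n)) (f : En n → ℝ)
    (g : En n → En n) (h : En n → Fin n → En n) : Prop :=
  AEStronglyMeasurable f volume ∧ AEStronglyMeasurable g volume ∧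
  HasWeakGradientOn Ω f g ∧
  (∀ i : Fin n, HasWeakGradientOn Ω (fun x => g x i) (fun x => h x i)) ∧
  ∀ K : Set (En n), K ⊆ Ω → IsCompact K →
    IntegrableOn (fun x => |f x| ^ p) K ∧ IntegrableOn (fun x => ‖g x‖ ^ p) K ∧
    ∀ i : Fin n, IntegrableOn (fun x => ‖h x i‖ ^ p) K

/-- `f ∈ W^{2,p}(ℝⁿ)` with weak gradient `g` and weak second derivatives `h`. -/
def MemW2p (p : ℝ) (f : En n → ℝ) (g : En n → En n) (h : En n → Fin n → En n) : Prop :=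
  AEStronglyMeasurable f volume ∧ AEStronglyMeasurable g volume ∧
  HasWeakGradientOn Set.univ f g ∧
  (∀ i : Fin n, HasWeakGradientOn Set.univ (fun x => g x i) (fun x => h x i)) ∧
  Integrable (fun x => |f x| ^ p) ∧ Integrable (fun x => ‖g x‖ ^ p) ∧
  ∀ i : Fin n, Integrable (fun x => ‖h x i‖ ^ p)

/-- The `p`-capacity of a compact set. -/
def capK (p : ℝ) (F : Set (En n)) : ℝ≥0∞ :=
  ⨅ (g : En n → ℝ) (_ : ContDiff ℝ (⊤ : ℕ∞) g ∧ HasCompactSupport g ∧ ∀ x ∈ F, 1 ≤ g x),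
    ∫⁻ x, (‖fderiv ℝ g x‖₊ : ℝ≥0∞) ^ p

/-- The `p`-capacity of an open set, by inner regularity over compact subsets. -/
def capOpen (p : ℝ) (U : Set (En n)) : ℝ≥0∞ :=
  ⨆ (F : Set (En n)) (_ : F ⊆ U ∧ IsCompact F), capK p F

/-- The `p`-capacity of an arbitrary set, by outer regularity over open supersets. -/
def cap (p : ℝ) (E : Set (En n)) : ℝ≥0∞ :=
  ⨅ (U : Set (En n)) (_ : E ⊆ U ∧ IsOpen U), capOpen p U

/-- `f` restricted to `s` is Lipschitz outside a subset of `s` of `p`-capacity zero. -/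
def LipschitzOnQE (p : ℝ) (f : En n → ℝ) (s : Set (En n)) : Prop :=
  ∃ N : Set (En n), N ⊆ s ∧ cap p N = 0 ∧ ∃ K : ℝ≥0, LipschitzOnWith K f (s \ N)

/-- The multiplicity function: the number of preimages of `y` in `A` under `φ`. -/
def Nphi (φ : En n → En n) (A : Set (En n)) (y : En n) : ℝ≥0∞ :=
  Measure.count {x ∈ A | φ x = y}

end

lemma aux_contDiff_u {n : ℕ} (ρ : ℝ) (p : En n) :
    ContDiff ℝ (⊤ : ℕ∞) (fun w : En n => ρ⁻¹ • (w - p)) := by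
  fun_prop

lemma aux_comp_compact {n : ℕ} {χ : En n → ℝ} (hc : HasCompactSupport χ) {ρ : ℝ} (hρ : 0 < ρ)
    (p : En n) : HasCompactSupport (fun w : En n => χ (ρ⁻¹ • (w - p))) := by
  have h := hc.comp_homeomorph
    ((Homeomorph.subRight p).trans (Homeomorph.smulOfNeZero ρ⁻¹ (inv_ne_zero hρ.ne')))
  exact h

/-- The `u`-divergence of `ψ(u) u`. -/
noncomputable def auxH {n : ℕ} (ψ : En n → ℝ) (u : En n) : ℝ := n * ψ u + fderiv ℝ ψ u u

lemma auxH_cont {n : ℕ} {ψ : En n → ℝ} (hψ : ContDiff ℝ (⊤ : ℕ∞) ψ) : Continuous (auxH ψ) := by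
  have h1 : Continuous (fderiv ℝ ψ) := hψ.continuous_fderiv (by simp)
  have h2 := hψ.continuous
  unfold auxH
  fun_prop

lemma auxH_bdd {n : ℕ} {ψ : En n → ℝ} (hψ : ContDiff ℝ (⊤ : ℕ∞) ψ) (hc : HasCompactSupport ψ) :
    ∃ M, ∀ u, ‖auxH ψ u‖ ≤ M := by
  apply HasCompactSupport.exists_bound_of_continuous _ (auxH_cont hψ)
  apply hc.mono'
  intro u hu
  by_contra h
  apply hu
  have h1 : ψ u = 0 := image_eq_zero_of_notMem_tsupport h
  have h2 : fderiv ℝ ψ u = 0 := by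
    have := tsupport_fderiv_subset ℝ (f := ψ)
    exact image_eq_zero_of_notMem_tsupport (fun h' => h (this h'))
  simp [auxH, h1, h2]

lemma aux_kernel_deriv {n : ℕ} {ψ : En n → ℝ} (hψ : ContDiff ℝ (⊤ : ℕ∞) ψ) (v : En n)
    {ρ : ℝ} (hρ : 0 < ρ) :
    HasDerivAt (fun ρ : ℝ => (ρ ^ n)⁻¹ * ψ (ρ⁻¹ • v))
      (-((ρ ^ (n + 1))⁻¹ * auxH ψ (ρ⁻¹ • v))) ρ := by
  have h1 : HasDerivAt (fun ρ : ℝ => ρ⁻¹ • v) ((-(ρ ^ 2)⁻¹) • v) ρ :=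
    (hasDerivAt_inv hρ.ne').smul_const v
  have h2 : HasFDerivAt ψ (fderiv ℝ ψ (ρ⁻¹ • v)) (ρ⁻¹ • v) :=
    (hψ.differentiable (by simp) _).hasFDerivAt
  have h3 := h2.comp_hasDerivAt ρ h1
  have h4 : HasDerivAt (fun ρ : ℝ => (ρ ^ n)⁻¹) (-(n * ρ ^ (n - 1)) / (ρ ^ n) ^ 2) ρ :=
    (hasDerivAt_pow n ρ).inv (pow_ne_zero _ hρ.ne')
  have h5 := h4.mul h3
  refine h5.congr_deriv ?_
  simp only [auxH, map_smul, smul_eq_mul, Function.comp]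
  rcases n with _ | n
  · field_simp
    simp [mul_comm]
  · simp only [Nat.add_sub_cancel]
    field_simp
    ring

lemma aux_hasDeriv {n : ℕ} {ψ : En n → ℝ} (hψ : ContDiff ℝ (⊤ : ℕ∞) ψ) (hc : HasCompactSupport ψ)
    {f : En n → ℝ} (hf : Integrable f) (p : En n) {ρ : ℝ} (hρ : 0 < ρ) :
    HasDerivAt (fun ρ : ℝ => ∫ w, f w * ((ρ ^ n)⁻¹ * ψ (ρ⁻¹ • (w - p))))
      (∫ w, f w * (-((ρ ^ (n + 1))⁻¹ * auxH ψ (ρ⁻¹ • (w - p))))) ρ := by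
  obtain ⟨M, hM⟩ := auxH_bdd hψ hc
  obtain ⟨M', hM'⟩ := hc.exists_bound_of_continuous hψ.continuous
  have hM0 : 0 ≤ M := (norm_nonneg _).trans (hM 0)
  have hψc := hψ.continuous
  have hHc := auxH_cont hψ
  refine (hasDerivAt_integral_of_dominated_loc_of_deriv_le (s := Set.Ioi (ρ / 2))
    (F' := fun ρ w => f w * (-((ρ ^ (n + 1))⁻¹ * auxH ψ (ρ⁻¹ • (w - p)))))
    (bound := fun w => ‖f w‖ * (((ρ / 2) ^ (n + 1))⁻¹ * M))
    (Ioi_mem_nhds (by linarith)) ?_ ?_ ?_ ?_ ?_ ?_).2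
  · refine Eventually.of_forall fun r => hf.aestronglyMeasurable.mul ?_
    exact Continuous.aestronglyMeasurable (by fun_prop)
  · refine hf.mul_bdd (c := (ρ ^ n)⁻¹ * M') (Continuous.aestronglyMeasurable (by fun_prop)) ?_
    refine Eventually.of_forall fun w => ?_
    rw [norm_mul, Real.norm_of_nonneg (by positivity)]
    gcongr
    exact hM' _
  · exact hf.aestronglyMeasurable.mul (Continuous.aestronglyMeasurable (by fun_prop))
  · refine Eventually.of_forall fun w r hr => ?_
    have hr' : ρ / 2 < r := hr
    have : 0 < r := by linarith
    rw [norm_mul, norm_neg, norm_mul, Real.norm_of_nonneg (by positivity : 0 ≤ (r ^ (n+1))⁻¹)]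
    gcongr
    exact hM _
  · exact hf.norm.mul_const _
  · refine Eventually.of_forall fun w r hr => ?_
    have hr' : ρ / 2 < r := hr
    exact (aux_kernel_deriv hψ (w - p) (by linarith)).const_mul (f w)

lemma aux_weak {n : ℕ} {ψ : En n → ℝ} (hψ : ContDiff ℝ (⊤ : ℕ∞) ψ) (hc : HasCompactSupport ψ)
    {f : En n → ℝ} (hf : Integrable f) {g : En n → En n} (hg : Integrable g)
    (hw : HasWeakGradientOn Set.univ f g) (p : En n) {ρ : ℝ} (hρ : 0 < ρ) :
    ∫ w, f w * auxH ψ (ρ⁻¹ • (w - p)) =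
      - (ρ * ∫ w, ψ (ρ⁻¹ • (w - p)) * ∑ i, g w i * (ρ⁻¹ • (w - p)) i) := by
  have hcoord : ∀ i : Fin n, ContDiff ℝ (⊤ : ℕ∞) (fun z : En n => z i) := fun i =>
    (EuclideanSpace.proj (𝕜 := ℝ) i).contDiff
  have hχ : ∀ i : Fin n, ContDiff ℝ (⊤ : ℕ∞) (fun z : En n => ψ z * z i) := fun i =>
    hψ.mul (hcoord i)
  have hχc : ∀ i : Fin n, HasCompactSupport (fun z : En n => ψ z * z i) := fun i =>
    hc.mul_right
  have htest : ∀ i : Fin n, IsTest Set.univ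
      (fun w : En n => ψ (ρ⁻¹ • (w - p)) * (ρ⁻¹ • (w - p)) i) := fun i =>
    ⟨(hχ i).comp (aux_contDiff_u ρ p), aux_comp_compact (hχc i) hρ p, Set.subset_univ _⟩
  have hder : ∀ (i : Fin n) (w : En n),
      fderiv ℝ (fun w : En n => ψ (ρ⁻¹ • (w - p)) * (ρ⁻¹ • (w - p)) i) w
        (EuclideanSpace.single i 1) =
      ρ⁻¹ * (fderiv ℝ ψ (ρ⁻¹ • (w - p)) (EuclideanSpace.single i 1) * (ρ⁻¹ • (w - p)) i
        + ψ (ρ⁻¹ • (w - p))) := by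
    intro i w
    have hu : HasFDerivAt (fun w : En n => ρ⁻¹ • (w - p)) (ρ⁻¹ • ContinuousLinearMap.id ℝ (En n)) w :=
      ((hasFDerivAt_id w).sub_const p).const_smul ρ⁻¹
    have h2 : HasFDerivAt ψ (fderiv ℝ ψ (ρ⁻¹ • (w - p))) (ρ⁻¹ • (w - p)) :=
      (hψ.differentiable (by simp) _).hasFDerivAt
    have h3 := h2.comp w hu
    have h4 := (EuclideanSpace.proj (𝕜 := ℝ) i).hasFDerivAt.comp w hu
    have h5 := h3.mul h4
    have h6 := h5.fderiv
    have h7 := congrArg (fun L => L (EuclideanSpace.single i (1:ℝ))) h6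
    refine Eq.trans h7 ?_
    simp [Function.comp]
    ring
  have hsum : ∀ u : En n, auxH ψ u =
      ∑ i, (fderiv ℝ ψ u (EuclideanSpace.single i 1) * u i + ψ u) := by
    intro u
    rw [Finset.sum_add_distrib, auxH, add_comm]
    congr 1
    · have hu : u = ∑ i, u i • EuclideanSpace.single i (1:ℝ) := by
        have := (EuclideanSpace.basisFun (Fin n) ℝ).sum_repr u
        simpa using this.symm
      have h9 := congrArg (fun z => fderiv ℝ ψ u z) hu
      simp only [map_sum, map_smul, smul_eq_mul] at h9
      rw [h9]
      exact Finset.sum_congr rfl fun i _ => mul_comm _ _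
    · simp
  have hgi : ∀ i : Fin n, Integrable (fun w => g w i) := fun i =>
    (EuclideanSpace.proj (𝕜 := ℝ) i).integrable_comp hg
  have hint1 : ∀ i : Fin n, Integrable (fun w => f w *
      fderiv ℝ (fun w : En n => ψ (ρ⁻¹ • (w - p)) * (ρ⁻¹ • (w - p)) i) w
        (EuclideanSpace.single i 1)) := by
    intro i
    have hcont : Continuous (fun w => 
      fderiv ℝ (fun w : En n => ψ (ρ⁻¹ • (w - p)) * (ρ⁻¹ • (w - p)) i) w
        (EuclideanSpace.single i 1)) :=
      ((htest i).1.continuous_fderiv (by simp)).clm_apply continuous_const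
    obtain ⟨M, hM⟩ := ((htest i).2.1.fderiv_apply (𝕜 := ℝ)
      (EuclideanSpace.single i 1)).exists_bound_of_continuous hcont
    exact hf.mul_bdd hcont.aestronglyMeasurable (Eventually.of_forall hM)
  have hint2 : ∀ i : Fin n, Integrable (fun w => g w i *
      (ψ (ρ⁻¹ • (w - p)) * (ρ⁻¹ • (w - p)) i)) := by
    intro i
    obtain ⟨M, hM⟩ := (htest i).2.1.exists_bound_of_continuous (htest i).1.continuous
    exact (hgi i).mul_bdd (htest i).1.continuous.aestronglyMeasurable (Eventually.of_forall hM)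
  have e1 : ∀ w, f w * auxH ψ (ρ⁻¹ • (w - p)) = ρ * ∑ i, f w *
      fderiv ℝ (fun w : En n => ψ (ρ⁻¹ • (w - p)) * (ρ⁻¹ • (w - p)) i) w
        (EuclideanSpace.single i 1) := by
    intro w
    simp_rw [hder]
    rw [hsum, ← Finset.mul_sum, ← Finset.mul_sum]
    field_simp
  have e2 : ∀ w, ψ (ρ⁻¹ • (w - p)) * ∑ i, g w i * (ρ⁻¹ • (w - p)) i =
      ∑ i, g w i * (ψ (ρ⁻¹ • (w - p)) * (ρ⁻¹ • (w - p)) i) := by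
    intro w
    rw [Finset.mul_sum]
    exact Finset.sum_congr rfl fun i _ => by ring
  simp_rw [e1, e2]
  rw [integral_const_mul, integral_finsetSum _ (fun i _ => hint1 i),
    integral_finsetSum _ (fun i _ => hint2 i), ← mul_neg, ← Finset.sum_neg_distrib]
  congr 1
  exact Finset.sum_congr rfl fun i _ => hw i _ (htest i)

lemma aux_vol {n : ℕ} (x : En n) {r : ℝ} (hr : 0 < r) :
    (volume : Measure (En n)).real (ball x r) =
      r ^ n * (volume : Measure (En n)).real (ball 0 1) := by
  rw [measureReal_def, Measure.addHaar_ball_of_pos _ _ hr, ENNReal.toReal_mul,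
    ENNReal.toReal_ofReal (by positivity), finrank_euclideanSpace_fin, measureReal_def]

lemma aux_vol_pos {n : ℕ} : 0 < (volume : Measure (En n)).real (ball 0 1) :=
  ENNReal.toReal_pos (measure_ball_pos _ _ one_pos).ne' measure_ball_lt_top.ne

lemma aux_deriv_bound {n : ℕ} {ψ : En n → ℝ} {e : En n} (he : ‖e‖ ≤ 1)
    (h0 : ∀ z, 0 ≤ ψ z) (h1 : ∀ z, ψ z ≤ 1) (hs : ∀ z, 1 ≤ dist z e → ψ z = 0)
    {g : En n → En n} (hg : Integrable g) {x : En n} {α : ℝ}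
    (hx : ∀ ρ : ℝ, 0 < ρ → ballAvg (fun w => ‖g w‖) x ρ ≤ α) {s ρ : ℝ} (hs0 : 0 < s)
    (hsρ : s ≤ ρ) :
    ‖∫ w, ψ (ρ⁻¹ • (w - (x - s • e))) * ∑ i, g w i * (ρ⁻¹ • (w - (x - s • e))) i‖ ≤
      2 * (2 * ρ) ^ n * (volume : Measure (En n)).real (ball 0 1) * α := by
  have hρ : 0 < ρ := by linarith
  have hV := aux_vol_pos (n := n)
  have hxa := hx (2 * ρ) (by linarith)
  have hint : IntegrableOn (fun w => 2 * ‖g w‖) (ball x (2 * ρ)) :=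
    (hg.norm.const_mul 2).integrableOn
  have key : ∫ w in ball x (2 * ρ), ‖g w‖ ≤
      (2 * ρ) ^ n * (volume : Measure (En n)).real (ball 0 1) * α := by
    rw [ballAvg, setAverage_eq, aux_vol _ (by linarith : 0 < 2 * ρ), smul_eq_mul,
      inv_mul_le_iff₀ (by positivity)] at hxa
    exact hxa
  calc _ ≤ ∫ w, (ball x (2 * ρ)).indicator (fun w => 2 * ‖g w‖) w := by
        apply norm_integral_le_of_norm_le
        · exact hint.integrable_indicator measurableSet_ball
        refine Eventually.of_forall fun w => ?_
        set u := ρ⁻¹ • (w - (x - s • e)) with hu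
        by_cases hd : 1 ≤ dist u e
        · rw [hs u hd]
          simp only [zero_mul, norm_zero]
          exact Set.indicator_nonneg (fun _ _ => by positivity) _
        · push Not at hd
          have hwu : w = x - s • e + ρ • u := by
            rw [hu, smul_smul, mul_inv_cancel₀ hρ.ne', one_smul]; abel
          have hmem : w ∈ ball x (2 * ρ) := by
            have : w - x = ρ • (u - e) + (ρ - s) • e := by
              rw [hwu]; module
            rw [mem_ball, dist_eq_norm, this]
            rw [dist_eq_norm] at hd
            calc _ ≤ ‖ρ • (u - e)‖ + ‖(ρ - s) • e‖ := norm_add_le _ _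
              _ = ρ * ‖u - e‖ + (ρ - s) * ‖e‖ := by
                rw [norm_smul, norm_smul, Real.norm_of_nonneg hρ.le,
                  Real.norm_of_nonneg (by linarith : 0 ≤ ρ - s)]
              _ < 2 * ρ := by nlinarith [norm_nonneg e, norm_nonneg (u - e)]
          rw [Set.indicator_of_mem hmem, norm_mul, Real.norm_of_nonneg (h0 u)]
          have hun : ‖u‖ ≤ 2 := by
            have : u = (u - e) + e := by abel
            rw [this]
            rw [dist_eq_norm] at hd
            exact (norm_add_le _ _).trans (by linarith)
          have hin : ‖∑ i, g w i * u i‖ ≤ ‖g w‖ * ‖u‖ := by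
            have h := norm_inner_le_norm (𝕜 := ℝ) u (g w)
            rw [PiLp.inner_apply] at h
            simpa [mul_comm] using h
          calc _ ≤ 1 * (‖g w‖ * ‖u‖) := by
                gcongr
                exact h1 u
            _ ≤ 2 * ‖g w‖ := by nlinarith [norm_nonneg (g w)]
    _ = 2 * ∫ w in ball x (2 * ρ), ‖g w‖ := by
        rw [integral_indicator measurableSet_ball, integral_const_mul]
    _ ≤ _ := by linarith

lemma aux_smooth {n : ℕ} {ψ : En n → ℝ} (hψ : ContDiff ℝ (⊤ : ℕ∞) ψ) (hc : HasCompactSupport ψ)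
    {e : En n} (he : ‖e‖ ≤ 1)
    (h0 : ∀ z, 0 ≤ ψ z) (h1 : ∀ z, ψ z ≤ 1) (hs : ∀ z, 1 ≤ dist z e → ψ z = 0)
    {f : En n → ℝ} (hf : Integrable f) {g : En n → En n} (hg : Integrable g)
    (hw : HasWeakGradientOn Set.univ f g) {x : En n} {α : ℝ}
    (hx : ∀ ρ : ℝ, 0 < ρ → ballAvg (fun w => ‖g w‖) x ρ ≤ α) {s R : ℝ} (hs0 : 0 < s)
    (hsR : s ≤ R) :
    ‖(∫ w, f w * ((R ^ n)⁻¹ * ψ (R⁻¹ • (w - (x - s • e))))) -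
      ∫ w, f w * ((s ^ n)⁻¹ * ψ (s⁻¹ • (w - (x - s • e))))‖ ≤
      (2 * 2 ^ n * (volume : Measure (En n)).real (ball 0 1) * α) * (R - s) := by
  have hb : ∀ ρ ∈ Set.Icc s R, ‖∫ w, f w * (-((ρ ^ (n + 1))⁻¹ * 
      auxH ψ (ρ⁻¹ • (w - (x - s • e)))))‖ ≤
      2 * 2 ^ n * (volume : Measure (En n)).real (ball 0 1) * α := by
    intro ρ hρ
    have hρ0 : 0 < ρ := by linarith [hρ.1]
    have e1 : ∀ w, f w * (-((ρ ^ (n + 1))⁻¹ * auxH ψ (ρ⁻¹ • (w - (x - s • e))))) =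
        (-(ρ ^ (n + 1))⁻¹) * (f w * auxH ψ (ρ⁻¹ • (w - (x - s • e)))) := fun w => by ring
    simp_rw [e1]
    rw [integral_const_mul, aux_weak hψ hc hf hg hw _ hρ0, norm_mul, norm_neg, norm_neg, norm_mul,
      Real.norm_of_nonneg hρ0.le, Real.norm_of_nonneg (by positivity)]
    have h := aux_deriv_bound he h0 h1 hs hg hx hs0 hρ.1
    calc _ ≤ (ρ ^ (n + 1))⁻¹ * (ρ * (2 * (2 * ρ) ^ n *
          (volume : Measure (En n)).real (ball 0 1) * α)) := by gcongr
      _ = _ := by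
        rw [mul_pow]
        field_simp
        ring
  have := (convex_Icc s R).norm_image_sub_le_of_norm_hasDerivWithin_le
    (f := fun ρ : ℝ => ∫ w, f w * ((ρ ^ n)⁻¹ * ψ (ρ⁻¹ • (w - (x - s • e)))))
    (f' := fun ρ : ℝ => ∫ w, f w * (-((ρ ^ (n + 1))⁻¹ * auxH ψ (ρ⁻¹ • (w - (x - s • e))))))
    (fun ρ hρ => (aux_hasDeriv hψ hc hf (x - s • e)
      (by linarith [hρ.1] : 0 < ρ)).hasDerivWithinAt) hb
    (Set.left_mem_Icc.2 hsR) (Set.right_mem_Icc.2 hsR)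
  rwa [Real.norm_of_nonneg (by linarith : 0 ≤ R - s)] at this

lemma aux_tendsto {n : ℕ} {ψ : ℕ → En n → ℝ} {e : En n} (hc : ∀ k, Continuous (ψ k))
    (h0 : ∀ k z, 0 ≤ ψ k z) (h1 : ∀ k z, ψ k z ≤ 1)
    (hs : ∀ k z, 1 ≤ dist z e → ψ k z = 0)
    (hi : ∀ z, dist z e < 1 → ∀ᶠ k in atTop, ψ k z = 1)
    {f : En n → ℝ} (hf : Integrable f) (p : En n) {ρ : ℝ} (hρ : 0 < ρ) :
    Tendsto (fun k => ∫ w, f w * ((ρ ^ n)⁻¹ * ψ k (ρ⁻¹ • (w - p)))) atTop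
      (𝓝 ((volume : Measure (En n)).real (ball 0 1) * ballAvg f (p + ρ • e) ρ)) := by
  have hV := aux_vol_pos (n := n)
  have e0 : (volume : Measure (En n)).real (ball 0 1) * ballAvg f (p + ρ • e) ρ =
      ∫ w, (ball (p + ρ • e) ρ).indicator (fun w => f w * (ρ ^ n)⁻¹) w := by
    rw [integral_indicator measurableSet_ball, integral_mul_const, ballAvg, setAverage_eq,
      aux_vol _ hρ, smul_eq_mul]
    field_simp
  rw [e0]
  apply tendsto_integral_of_dominated_convergence (fun w => ‖f w‖ * (ρ ^ n)⁻¹)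
  · intro k
    have := hc k
    exact hf.aestronglyMeasurable.mul (Continuous.aestronglyMeasurable (by fun_prop))
  · exact hf.norm.mul_const _
  · intro k
    refine Eventually.of_forall fun w => ?_
    rw [norm_mul, norm_mul, Real.norm_of_nonneg (h0 _ _), 
      Real.norm_of_nonneg (by positivity : 0 ≤ (ρ ^ n)⁻¹)]
    gcongr
    exact mul_le_of_le_one_right (by positivity) (h1 _ _)
  · refine Eventually.of_forall fun w => ?_
    have hd : dist w (p + ρ • e) = ρ * dist (ρ⁻¹ • (w - p)) e := by
      rw [dist_eq_norm, dist_eq_norm]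
      have : w - (p + ρ • e) = ρ • (ρ⁻¹ • (w - p) - e) := by
        rw [smul_sub, smul_smul, mul_inv_cancel₀ hρ.ne', one_smul]; abel
      rw [this, norm_smul, Real.norm_of_nonneg hρ.le]
    by_cases h : dist (ρ⁻¹ • (w - p)) e < 1
    · have hm : w ∈ ball (p + ρ • e) ρ := by
        rw [mem_ball, hd]; nlinarith
      rw [Set.indicator_of_mem hm]
      refine tendsto_const_nhds.congr' ?_
      filter_upwards [hi _ h] with k hk
      rw [hk, mul_one]
    · have hm : w ∉ ball (p + ρ • e) ρ := by
        rw [mem_ball, hd]; nlinarith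
      rw [Set.indicator_of_notMem hm]
      refine tendsto_const_nhds.congr fun k => ?_
      rw [hs k _ (not_lt.1 h)]
      simp

lemma aux_step {n : ℕ} {e : En n} (he : ‖e‖ ≤ 1)
    {f : En n → ℝ} (hf : Integrable f) {g : En n → En n} (hg : Integrable g)
    (hw : HasWeakGradientOn Set.univ f g) {x : En n} {α : ℝ}
    (hx : ∀ ρ : ℝ, 0 < ρ → ballAvg (fun w => ‖g w‖) x ρ ≤ α) {s R : ℝ} (hs0 : 0 < s)
    (hsR : s ≤ R) :
    |ballAvg f (x + (R - s) • e) R - ballAvg f x s| ≤ 2 * 2 ^ n * α * (R - s) := by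
  have hV := aux_vol_pos (n := n)
  let B : ℕ → ContDiffBump e := fun k =>
    { rIn := 1 - ((k : ℝ) + 2)⁻¹
      rOut := 1
      rIn_pos := by
        have : ((k : ℝ) + 2)⁻¹ < 1 := inv_lt_one_of_one_lt₀ (by
          have : (0:ℝ) ≤ k := Nat.cast_nonneg k
          linarith)
        linarith
      rIn_lt_rOut := by
        have : 0 < ((k : ℝ) + 2)⁻¹ := by positivity
        linarith }
  have hs : ∀ k z, 1 ≤ dist z e → B k z = 0 := fun k z hz => (B k).zero_of_le_dist hz
  have hi : ∀ z, dist z e < 1 → ∀ᶠ k in atTop, B k z = 1 := by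
    intro z hz
    have ht : Tendsto (fun k : ℕ => 1 - ((k : ℝ) + 2)⁻¹) atTop (𝓝 (1 - 0)) := by
      refine tendsto_const_nhds.sub (tendsto_inv_atTop_zero.comp ?_)
      exact tendsto_atTop_add_const_right _ _ tendsto_natCast_atTop_atTop
    rw [sub_zero] at ht
    filter_upwards [ht.eventually (lt_mem_nhds hz)] with k hk
    exact (B k).one_of_mem_closedBall (mem_closedBall.2 hk.le)
  have hT : ∀ ρ : ℝ, 0 < ρ → _ := fun ρ hρ => aux_tendsto (ψ := fun k => B k)
    (fun k => (B k).continuous) (fun k z => (B k).nonneg) (fun k z => (B k).le_one) hs hi hf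
    (x - s • e) hρ
  have hlim := ((hT R (by linarith)).sub (hT s hs0)).norm
  have hle := le_of_tendsto' hlim (fun k => aux_smooth (B k).contDiff (B k).hasCompactSupport he
    (fun z => (B k).nonneg) (fun z => (B k).le_one) (hs k) hf hg hw hx hs0 hsR)
  have c1 : x - s • e + R • e = x + (R - s) • e := by module
  have c2 : x - s • e + s • e = x := by abel
  rw [c1, c2, ← mul_sub, norm_mul, Real.norm_of_nonneg hV.le, Real.norm_eq_abs] at hle
  have : (volume : Measure (En n)).real (ball 0 1) *
      |ballAvg f (x + (R - s) • e) R - ballAvg f x s| ≤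
      (volume : Measure (En n)).real (ball 0 1) * (2 * 2 ^ n * α * (R - s)) := by
    linarith
  exact le_of_mul_le_mul_left this hV

lemma aux_two {n : ℕ} {f : En n → ℝ} (hf : Integrable f) {g : En n → En n} (hg : Integrable g)
    (hw : HasWeakGradientOn Set.univ f g) {x y : En n} {α : ℝ}
    (hx : ∀ ρ : ℝ, 0 < ρ → ballAvg (fun w => ‖g w‖) x ρ ≤ α)
    (hy : ∀ ρ : ℝ, 0 < ρ → ballAvg (fun w => ‖g w‖) y ρ ≤ α) (hxy : x ≠ y)
    {s : ℝ} (hs0 : 0 < s) :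
    |ballAvg f x s - ballAvg f y s| ≤ 2 * 2 ^ n * α * dist x y := by
  have hd : 0 < dist x y := dist_pos.2 hxy
  set d := dist x y with hdd
  have hn : ‖y - x‖ = d := by rw [hdd, dist_comm, dist_eq_norm]
  have he : ‖d⁻¹ • (y - x)‖ ≤ 1 := by
    rw [norm_smul, hn, Real.norm_of_nonneg (by positivity), inv_mul_cancel₀ hd.ne']
  have h1 := aux_step he hf hg hw hx hs0 (R := s + d / 2) (by linarith)
  have h2 := aux_step (e := -(d⁻¹ • (y - x))) (by rwa [norm_neg]) hf hg hw hy hs0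
    (R := s + d / 2) (by linarith)
  have hc : y + (s + d / 2 - s) • -(d⁻¹ • (y - x)) = x + (s + d / 2 - s) • (d⁻¹ • (y - x)) := by
    have : (s + d / 2 - s) * d⁻¹ = 1 / 2 := by field_simp; ring
    rw [smul_neg, smul_smul, this]
    module
  rw [hc] at h2
  have h3 := abs_sub_le (ballAvg f x s) (ballAvg f (x + (s + d / 2 - s) • (d⁻¹ • (y - x))) (s + d/2))
    (ballAvg f y s)
  rw [abs_sub_comm (ballAvg f x s) (ballAvg f (x + _) _)] at h3
  linarith

lemma aux_preciseRep {n : ℕ} {f : En n → ℝ} {x : En n}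
    (h : ∃ L : ℝ, Tendsto (fun r => ballAvg f x r) (nhdsWithin 0 (Set.Ioi 0)) (nhds L)) :
    Tendsto (fun r => ballAvg f x r) (nhdsWithin 0 (Set.Ioi 0)) (nhds (preciseRep f x)) := by
  rw [preciseRep, dif_pos h]
  exact h.choose_spec


/-- the precise representative is Lipschitz on `R_α \ E` with constant `C(n)·α`. -/
theorem preciseRep_lipschitz_on_Ralpha {n : ℕ} :
    ∃ C : ℝ, 0 < C ∧
      ∀ (f : En n → ℝ) (g : En n → En n), MemW1p 1 f g →
        ∀ α : ℝ, 0 < α →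
          ∀ x y : En n,
            x ∈ {z : En n | ∀ ρ : ℝ, 0 < ρ → ballAvg (fun w => ‖g w‖) z ρ ≤ α} \
              {z : En n | ¬ ∃ L : ℝ, Filter.Tendsto (fun ρ => ballAvg f z ρ)
                (nhdsWithin 0 (Set.Ioi 0)) (nhds L)} →
            y ∈ {z : En n | ∀ ρ : ℝ, 0 < ρ → ballAvg (fun w => ‖g w‖) z ρ ≤ α} \
              {z : En n | ¬ ∃ L : ℝ, Filter.Tendsto (fun ρ => ballAvg f z ρ)
                (nhdsWithin 0 (Set.Ioi 0)) (nhds L)} →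
            |preciseRep f x - preciseRep f y| ≤ C * α * dist x y := by
  refine ⟨2 * 2 ^ n, by positivity, ?_⟩
  rintro f g ⟨hfm, hgm, hw, hfi, hgi⟩ α hα x y ⟨hx, hxE⟩ ⟨hy, hyE⟩
  have hf : Integrable f := by
    simp only [Real.rpow_one] at hfi
    exact (integrable_norm_iff hfm).1 hfi
  have hg : Integrable g := by
    simp only [Real.rpow_one] at hgi
    exact (integrable_norm_iff hgm).1 hgi
  by_cases hxy : x = y
  · simp [hxy]
  have tx := aux_preciseRep (not_not.1 hxE)
  have ty := aux_preciseRep (not_not.1 hyE)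
  refine le_of_tendsto (tx.sub ty).abs ?_
  filter_upwards [self_mem_nhdsWithin] with s hs
  exact aux_two hf hg hw hx hy hxy hs
end

section
/- Let p ≥ 1, f ∈ W^{1,p}(R^n), and α > 0. Define R_α = {x ∈ R^n : sup_{ρ>0} f_{B(x,ρ)} ≤ α}. Then the p-capacity of R^n \ R_α is at most C(n,p) α^{-p} ‖∇f‖_{L^p(R^n)}^p. -/
open MeasureTheory Metric Filter Set
open scoped ENNReal Topology NNReal

/-- convolution -/
noncomputable def cv {n : ℕ} (f b : En n → ℝ) (x : En n) : ℝ := ∫ t, f t * b (x - t)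

lemma cv_eq {n : ℕ} (f b : En n → ℝ) :
    cv f b = convolution f b (ContinuousLinearMap.mul ℝ ℝ) volume := by
  ext x; simp [cv, convolution]

lemma abs_le_rpow {p : ℝ} (hp : 1 ≤ p) {ε : ℝ} (hε : 0 < ε) (a : ℝ) (ha : 0 ≤ a) :
    a ≤ ε + ε ^ (1 - p) * a ^ p := by
  rcases le_or_gt a ε with h | h
  · have : 0 ≤ ε ^ (1 - p) * a ^ p := by positivity
    linarith
  · have ha' : 0 < a := hε.trans h
    have h1 : a = a ^ (1 - p) * a ^ p := by
      rw [← Real.rpow_add ha']; simp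
    have h2 : a ^ (1 - p) ≤ ε ^ (1 - p) := Real.rpow_le_rpow_of_nonpos hε h.le (by linarith)
    have : a ^ (1 - p) * a ^ p ≤ ε ^ (1 - p) * a ^ p := by gcongr
    linarith

lemma locInt_of {n : ℕ} {E : Type*} [NormedAddCommGroup E] {p : ℝ} (hp : 1 ≤ p) {f : En n → E}
    (hf : AEStronglyMeasurable f volume) (h : Integrable (fun x => ‖f x‖ ^ p)) :
    LocallyIntegrable f volume := by
  rw [locallyIntegrable_iff]
  intro k hk
  have : IntegrableOn (fun x => 1 + ‖f x‖ ^ p) k volume :=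
    (integrableOn_const hk.measure_lt_top.ne).add h.integrableOn
  refine Integrable.mono' this hf.restrict (Eventually.of_forall fun x => ?_)
  have := abs_le_rpow hp one_pos ‖f x‖ (norm_nonneg _)
  simpa using this

lemma MemW1p.lif {n : ℕ} {p : ℝ} (hp : 1 ≤ p) {f : En n → ℝ} {g : En n → En n}
    (h : MemW1p p f g) : LocallyIntegrable f volume :=
  locInt_of hp h.1 (by simpa using h.2.2.2.1)

lemma MemW1p.lig {n : ℕ} {p : ℝ} (hp : 1 ≤ p) {f : En n → ℝ} {g : En n → En n}
    (h : MemW1p p f g) : LocallyIntegrable g volume :=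
  locInt_of hp h.2.1 h.2.2.2.2

lemma cv_contDiff {n : ℕ} {f b : En n → ℝ} (hf : LocallyIntegrable f volume)
    (hb : ContDiff ℝ (⊤ : ℕ∞) b) (hc : HasCompactSupport b) :
    ContDiff ℝ (⊤ : ℕ∞) (cv f b) := by
  rw [cv_eq]
  exact hc.contDiff_convolution_right _ hf hb

lemma cv_integrable {n : ℕ} {E : Type*} [NormedAddCommGroup E] [NormedSpace ℝ E]
    {f : En n → E} {b : En n → ℝ} (hf : LocallyIntegrable f volume)
    (hb : Continuous b) (hc : HasCompactSupport b) (x : En n) :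
    Integrable (fun t => b (x - t) • f t) := by
  have h1 : HasCompactSupport (fun t => b (x - t)) := by
    have := hc.comp_homeomorph (Homeomorph.subLeft x)
    simpa [Function.comp_def] using this
  exact hf.integrable_smul_left_of_hasCompactSupport (by fun_prop) h1

lemma cv_fderiv {n : ℕ} {p : ℝ} (hp : 1 ≤ p) {f : En n → ℝ} {g : En n → En n}
    (h : MemW1p p f g) {b : En n → ℝ}
    (hb : ContDiff ℝ (⊤ : ℕ∞) b) (hc : HasCompactSupport b) (x v : En n) :
    fderiv ℝ (cv f b) x v = inner ℝ (∫ t, b (x - t) • g t) v := by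
  have hf := h.lif hp
  have hg := h.lig hp
  have key : ∀ i, fderiv ℝ (cv f b) x (EuclideanSpace.single i 1) =
      (∫ t, b (x - t) • g t) i := by
    intro i
    have hI := cv_integrable hg hb.continuous hc x
    have e1 : (∫ t, b (x - t) • g t) i = ∫ t, b (x - t) * g t i := by
      have := (EuclideanSpace.proj (𝕜 := ℝ) i).integral_comp_comm hI
      simpa using this.symm
    have hd := hc.hasFDerivAt_convolution_right (ContinuousLinearMap.mul ℝ ℝ) hf
      (hb.of_le (by exact_mod_cast le_top)) x
    rw [e1, cv_eq, hd.fderiv]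
    rw [convolution_precompR_apply _ hf (hc.fderiv (𝕜 := ℝ))
      (hb.continuous_fderiv (by simp)), convolution_def]
    have htest : IsTest univ (fun t => b (x - t)) := by
      refine ⟨by fun_prop, ?_, subset_univ _⟩
      have := hc.comp_homeomorph (Homeomorph.subLeft x)
      simpa [Function.comp_def] using this
    have := h.2.2.1 i _ htest
    have e2 : ∀ t, fderiv ℝ (fun t => b (x - t)) t (EuclideanSpace.single i 1) =
        - fderiv ℝ b (x - t) (EuclideanSpace.single i 1) := by
      intro t
      have hb' : HasFDerivAt b (fderiv ℝ b (x - t)) (x - t) :=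
        (hb.differentiable (by simp) _).hasFDerivAt
      have h2 : HasFDerivAt (fun t => x - t) (-ContinuousLinearMap.id ℝ (En n)) t :=
        (hasFDerivAt_id t).const_sub x
      have h3 : HasFDerivAt (fun t => b (x - t)) _ t := hb'.comp t h2
      rw [h3.fderiv]
      simp
    simp only [e2, mul_neg, integral_neg, neg_inj] at this
    simp only [ContinuousLinearMap.mul_apply']
    rw [this]
    congr 1; ext t; ring
  have : fderiv ℝ (cv f b) x = innerSL ℝ (∫ t, b (x - t) • g t) := by
    apply ContinuousLinearMap.coe_injective
    apply (EuclideanSpace.basisFun (Fin n) ℝ).toBasis.ext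
    intro i
    simp [key i, EuclideanSpace.inner_single_right]
  rw [this]; simp

lemma cv_fderiv_enorm {n : ℕ} {p : ℝ} (hp : 1 ≤ p) {f : En n → ℝ} {g : En n → En n}
    (h : MemW1p p f g) {b : En n → ℝ}
    (hb : ContDiff ℝ (⊤ : ℕ∞) b) (hc : HasCompactSupport b) (x : En n) :
    ‖fderiv ℝ (cv f b) x‖ₑ ≤ ∫⁻ t, ‖b (x - t)‖ₑ * ‖g t‖ₑ := by
  have h1 : ‖fderiv ℝ (cv f b) x‖ₑ ≤ ‖∫ t, b (x - t) • g t‖ₑ := by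
    rw [enorm_le_iff_norm_le]
    refine ContinuousLinearMap.opNorm_le_bound _ (norm_nonneg _) fun v => ?_
    rw [cv_fderiv hp h hb hc]
    exact norm_inner_le_norm _ _
  refine h1.trans ((enorm_integral_le_lintegral_enorm _).trans (le_of_eq ?_))
  simp only [enorm_smul]

lemma cv_decay {n : ℕ} {p : ℝ} (hp : 1 ≤ p) {f : En n → ℝ} {g : En n → En n}
    (h : MemW1p p f g) {b : En n → ℝ}
    (hb : ContDiff ℝ (⊤ : ℕ∞) b) (hc : HasCompactSupport b) {ε : ℝ} (hε : 0 < ε) :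
    ∃ R : ℝ, ∀ x, R ≤ ‖x‖ → |cv f b x| ≤ ε := by
  obtain ⟨M, hM⟩ := hc.exists_bound_of_continuous hb.continuous
  have hM0 : 0 ≤ M := (norm_nonneg _).trans (hM 0)
  obtain ⟨r, hr⟩ := hc.isCompact.isBounded.subset_closedBall (0 : En n)
  set V := volume.real (closedBall (0 : En n) r) with hV
  have hV0 : 0 ≤ V := measureReal_nonneg
  -- choose η
  obtain ⟨η, hη, hη'⟩ : ∃ η > 0, M * (η * V) ≤ ε / 2 := by
    refine ⟨ε / (2 * (M * V + 1)), by positivity, ?_⟩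
    rw [show M * (ε / (2 * (M * V + 1)) * V) = ε / 2 * (M * V / (M * V + 1)) by field_simp]
    have : M * V / (M * V + 1) ≤ 1 := by rw [div_le_one (by positivity)]; linarith
    nlinarith
  have hF := h.2.2.2.1
  set K := η ^ (1 - p) with hK
  have hK0 : 0 < K := by positivity
  -- tails
  have htail : Tendsto (fun k : ℕ => ∫ x in (ball (0 : En n) k)ᶜ, |f x| ^ p) atTop (𝓝 0) := by
    have := tendsto_setIntegral_of_antitone (μ := volume) (f := fun x => |f x| ^ p)
      (s := fun k : ℕ => (ball (0 : En n) k)ᶜ) (fun k => measurableSet_ball.compl)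
      (fun i j hij => compl_subset_compl.2 (ball_subset_ball (by exact_mod_cast hij)))
      ⟨0, hF.integrableOn⟩
    have e : (⋂ k : ℕ, (ball (0 : En n) k)ᶜ) = ∅ := by
      rw [← compl_iUnion, iUnion_ball_nat]; simp
    simpa [e] using this
  obtain ⟨k, hk⟩ := (htail.eventually (gt_mem_nhds (show 0 < ε / (2 * (M * K + 1)) by positivity))).exists
  refine ⟨k + r, fun x hx => ?_⟩
  have hsub : closedBall x r ⊆ (ball (0 : En n) k)ᶜ := by
    intro y hy hy'
    simp only [mem_closedBall, mem_ball, dist_zero_right] at hy hy'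
    have : ‖x‖ ≤ ‖y‖ + dist y x := by
      rw [dist_comm, dist_eq_norm]; 
      have := norm_add_le y (x - y); simpa using this
    linarith
  have hint : IntegrableOn (fun t => M * (η + K * |f t| ^ p)) (closedBall x r) volume :=
    (((integrableOn_const (isCompact_closedBall x r).measure_lt_top.ne).add
      (hF.integrableOn.const_mul K))).const_mul M
  have h1 : |cv f b x| ≤ ∫ t in closedBall x r, M * (η + K * |f t| ^ p) := by
    rw [cv, ← Real.norm_eq_abs, ← integral_indicator measurableSet_closedBall]
    refine norm_integral_le_of_norm_le (hint.integrable_indicator measurableSet_closedBall)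
      (Eventually.of_forall fun t => ?_)
    by_cases ht : t ∈ closedBall x r
    · rw [indicator_of_mem ht, norm_mul, mul_comm]
      have := abs_le_rpow hp hη |f t| (abs_nonneg _)
      exact mul_le_mul (hM _) this (abs_nonneg _) hM0
    · rw [indicator_of_notMem ht]
      have : b (x - t) = 0 := by
        by_contra hne
        have := hr (subset_tsupport _ hne)
        apply ht
        simpa [dist_eq_norm, norm_sub_rev] using this
      simp [this]
  have h2 : ∫ t in closedBall x r, M * (η + K * |f t| ^ p) =
      M * (η * V) + M * K * ∫ t in closedBall x r, |f t| ^ p := by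
    have hc1 : Integrable (fun _ : En n => η) (volume.restrict (closedBall x r)) :=
      integrableOn_const (isCompact_closedBall x r).measure_lt_top.ne
    rw [integral_const_mul, integral_add hc1 (hF.integrableOn.const_mul K), integral_const_mul, setIntegral_const, hV]
    simp only [measureReal_def, Measure.addHaar_closedBall_center volume x, smul_eq_mul]
    ring
  have h3 : ∫ t in closedBall x r, |f t| ^ p ≤ ∫ t in (ball (0 : En n) k)ᶜ, |f t| ^ p :=
    setIntegral_mono_set hF.integrableOn (Eventually.of_forall fun t => by positivity)
      hsub.eventuallyLE
  have h4 : M * K * ∫ t in closedBall x r, |f t| ^ p ≤ ε / 2 := by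
    calc _ ≤ M * K * (ε / (2 * (M * K + 1))) := by gcongr; exact h3.trans hk.le
      _ = ε / 2 * (M * K / (M * K + 1)) := by field_simp
      _ ≤ ε / 2 * 1 := by
        gcongr; rw [div_le_one (by positivity)]; linarith
      _ = _ := by ring
  linarith

/-- Vitali selection: countable (finite) disjoint balls bound for the measure. -/
lemma vitali_meas {n : ℕ} (A : Set (En n)) (r : En n → ℝ) (R : ℝ) (hr : ∀ x ∈ A, 0 < r x)
    (hR : ∀ x ∈ A, r x ≤ R) (w : En n → ℝ≥0∞)
    (c : ℝ≥0∞) (h : ∀ x ∈ A, volume (closedBall x (r x)) ≤ c * ∫⁻ y in closedBall x (r x), w y) :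
    volume A ≤ ENNReal.ofReal (4 ^ n) * c * ∫⁻ y, w y := by
  obtain ⟨u, huA, hdisj, hcov⟩ := Vitali.exists_disjoint_subfamily_covering_enlargement_closedBall
    A id r R hR 4 (by norm_num)
  simp only [id] at hdisj hcov
  have hcount : u.Countable := hdisj.countable_of_nonempty_interior fun x hx => by
    have : ball x (r x) ⊆ interior (closedBall x (r x)) := ball_subset_interior_closedBall
    exact ⟨x, this (mem_ball_self (hr x (huA hx)))⟩
  have h1 : A ⊆ ⋃ x ∈ u, closedBall x (4 * r x) := by
    intro a ha
    obtain ⟨b, hb, hab⟩ := hcov a ha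
    exact mem_biUnion hb (hab (mem_closedBall_self (hr a ha).le))
  have hc' := hcount.to_subtype
  calc volume A ≤ volume (⋃ x ∈ u, closedBall x (4 * r x)) := measure_mono h1
    _ ≤ ∑' x : u, volume (closedBall (x : En n) (4 * r x)) := measure_biUnion_le _ hcount _
    _ ≤ ∑' x : u, ENNReal.ofReal (4 ^ n) * c * ∫⁻ y in closedBall (x : En n) (r x), w y := by
        refine ENNReal.tsum_le_tsum fun x => ?_
        rw [Measure.addHaar_closedBall_mul_of_pos volume _ (by norm_num), mul_assoc]
        simp only [finrank_euclideanSpace, Fintype.card_fin]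
        gcongr
        rw [← Measure.addHaar_closedBall_center volume (x : En n)]
        exact h x (huA x.2)
    _ = ENNReal.ofReal (4 ^ n) * c * ∑' x : u, ∫⁻ y in closedBall (x : En n) (r x), w y :=
        ENNReal.tsum_mul_left
    _ = ENNReal.ofReal (4 ^ n) * c * ∫⁻ y in ⋃ x : u, closedBall (x : En n) (r x), w y := by
        rw [lintegral_iUnion (fun _ => measurableSet_closedBall)]
        intro x y hxy
        exact hdisj x.2 y.2 (fun h => hxy (Subtype.ext h))
    _ ≤ _ := by gcongr; exact Measure.restrict_le_self

lemma weak_type {n : ℕ} (G : En n → ℝ) (hG : Measurable G)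
    (S : Finset ℝ) (hS : ∀ r ∈ S, 0 < r) (t : ℝ) (ht : 0 < t) (A : Set (En n))
    (hA : ∀ x ∈ A, ∃ r ∈ S, ENNReal.ofReal t * volume (closedBall x r) <
      ∫⁻ y in closedBall x r, ENNReal.ofReal (G y)) :
    volume A ≤ ENNReal.ofReal (4 ^ n) * ENNReal.ofReal (2 / t) *
      (volume.withDensity (fun y => ENNReal.ofReal (G y))) {y | t < 2 * G y} := by
  choose! r hrS hr using hA
  have hm : MeasurableSet {y | t < 2 * G y} := measurableSet_lt measurable_const (by fun_prop)
  rw [withDensity_apply _ hm, ← lintegral_indicator hm]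
  refine vitali_meas A r (∑ s ∈ S, s) (fun x hx => hS _ (hrS x hx))
    (fun x hx => Finset.single_le_sum (f := fun s => s) (fun s hs => (hS s hs).le) (hrS x hx)) _ _ ?_
  intro x hx
  set B := closedBall x (r x)
  have hB : volume B ≠ ∞ := (isCompact_closedBall x (r x)).measure_lt_top.ne
  have h1 : ∫⁻ y in B, ENNReal.ofReal (G y) ≤ ENNReal.ofReal (t / 2) * volume B +
      ∫⁻ y in B, {y | t < 2 * G y}.indicator (fun y => ENNReal.ofReal (G y)) y := by
    rw [← setLIntegral_const, ← lintegral_add_left measurable_const]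
    refine lintegral_mono fun y => ?_
    by_cases hy : t < 2 * G y
    · rw [indicator_of_mem (by exact hy)]; exact le_add_self
    · rw [indicator_of_notMem (by exact hy), add_zero]
      exact ENNReal.ofReal_le_ofReal (by linarith)
  have h2 : ENNReal.ofReal t * volume B = ENNReal.ofReal (t / 2) * volume B +
      ENNReal.ofReal (t / 2) * volume B := by
    rw [← add_mul, ← ENNReal.ofReal_add (by positivity) (by positivity)]; congr; ring
  have h3 := (hr x hx).trans_le h1
  rw [h2] at h3
  have h4 : ENNReal.ofReal (t / 2) * volume B ≤
    ∫⁻ y in B, {y | t < 2 * G y}.indicator (fun y => ENNReal.ofReal (G y)) y := 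
    (ENNReal.add_lt_add_iff_left (ENNReal.mul_ne_top ENNReal.ofReal_ne_top hB)).1 h3 |>.le
  calc volume B = ENNReal.ofReal (2 / t) * (ENNReal.ofReal (t / 2) * volume B) := by
        rw [← mul_assoc, ← ENNReal.ofReal_mul (by positivity)]
        rw [show 2 / t * (t / 2) = 1 by field_simp]; simp
    _ ≤ _ := by gcongr

/-- strong type (p,p), for a measurable function dominated by a maximal function. -/
lemma strong_type {n : ℕ} {p : ℝ} (hp : 1 < p) (G : En n → ℝ) (hG : Measurable G)
    (hG0 : ∀ x, 0 ≤ G x)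
    (S : Finset ℝ) (hS : ∀ r ∈ S, 0 < r) (N : En n → ℝ) (hN : Measurable N) (hN0 : ∀ x, 0 ≤ N x)
    (hNS : ∀ x t, 0 < t → t < N x → ∃ r ∈ S, ENNReal.ofReal t * volume (closedBall x r) <
      ∫⁻ y in closedBall x r, ENNReal.ofReal (G y)) :
    ∫⁻ x, ENNReal.ofReal (N x ^ p) ≤
      ENNReal.ofReal (p * (2 * 4 ^ n) * (p - 1)⁻¹ * 2 ^ (p - 1)) *
        ∫⁻ x, ENNReal.ofReal (G x ^ p) := by
  set ν := volume.withDensity (fun y => ENNReal.ofReal (G y)) with hν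
  rw [lintegral_rpow_eq_lintegral_meas_lt_mul volume (Eventually.of_forall hN0) hN.aemeasurable
    (by linarith)]
  have h2 := lintegral_rpow_eq_lintegral_meas_lt_mul ν (f := fun y => 2 * G y)
    (Eventually.of_forall fun x => by have := hG0 x; simp [this]) (by fun_prop)
    (show 0 < p - 1 by linarith)
  have h3 : ∫⁻ t in Ioi (0 : ℝ), volume {a | t < N a} * ENNReal.ofReal (t ^ (p - 1)) ≤
      ENNReal.ofReal (2 * 4 ^ n) *
      ∫⁻ t in Ioi (0 : ℝ), ν {a | t < 2 * G a} * ENNReal.ofReal (t ^ (p - 1 - 1)) := by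
    rw [← lintegral_const_mul' _ _ ENNReal.ofReal_ne_top]
    refine setLIntegral_mono' measurableSet_Ioi fun t ht => ?_
    have ht : 0 < t := ht
    have := weak_type G hG S hS t ht {a | t < N a} (fun x hx => hNS x t ht hx)
    calc _ ≤ (ENNReal.ofReal (4 ^ n) * ENNReal.ofReal (2 / t) * ν {y | t < 2 * G y}) *
          ENNReal.ofReal (t ^ (p - 1)) := by gcongr
      _ = (ENNReal.ofReal (4 ^ n) * ENNReal.ofReal (2 / t) * ENNReal.ofReal (t ^ (p - 1))) *
          ν {y | t < 2 * G y} := by ring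
      _ = (ENNReal.ofReal (2 * 4 ^ n) * ENNReal.ofReal (t ^ (p - 1 - 1))) *
          ν {y | t < 2 * G y} := by
        congr 1
        rw [← ENNReal.ofReal_mul (by positivity), ← ENNReal.ofReal_mul (by positivity),
          ← ENNReal.ofReal_mul (by positivity), Real.rpow_sub_one ht.ne' (p - 1)]
        congr 1; field_simp
      _ = _ := by ring
  have h4 : ∫⁻ y, ENNReal.ofReal ((2 * G y) ^ (p - 1)) ∂ν =
      ENNReal.ofReal (2 ^ (p - 1)) * ∫⁻ x, ENNReal.ofReal (G x ^ p) := by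
    rw [hν, lintegral_withDensity_eq_lintegral_mul₀ (by fun_prop) (by fun_prop),
      ← lintegral_const_mul' _ _ ENNReal.ofReal_ne_top]
    refine lintegral_congr fun y => ?_
    simp only [Pi.mul_apply]
    rw [← ENNReal.ofReal_mul (hG0 y), ← ENNReal.ofReal_mul (by positivity),
      Real.mul_rpow (by norm_num) (hG0 y)]
    congr 1
    rcases (hG0 y).eq_or_lt with h | h
    · rw [← h, Real.zero_rpow (by linarith : p ≠ 0)]; ring
    · rw [Real.rpow_sub_one h.ne']; field_simp
  have h5 : ∫⁻ t in Ioi (0 : ℝ), ν {a | t < 2 * G a} * ENNReal.ofReal (t ^ (p - 1 - 1)) =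
      ENNReal.ofReal ((p - 1)⁻¹) * (ENNReal.ofReal (2 ^ (p - 1)) * ∫⁻ x, ENNReal.ofReal (G x ^ p)) := by
    rw [← h4, h2, ← mul_assoc, ← ENNReal.ofReal_mul (by simp; linarith),
      inv_mul_cancel₀ (by linarith), ENNReal.ofReal_one, one_mul]
  rw [h5] at h3
  have hp1 : 0 < p - 1 := by linarith
  calc _ ≤ ENNReal.ofReal p * (ENNReal.ofReal (2 * 4 ^ n) * (ENNReal.ofReal ((p - 1)⁻¹) *
        (ENNReal.ofReal (2 ^ (p - 1)) * ∫⁻ x, ENNReal.ofReal (G x ^ p)))) := by gcongr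
    _ = _ := by
      rw [ENNReal.ofReal_mul (by positivity), ENNReal.ofReal_mul (by positivity),
        ENNReal.ofReal_mul (by positivity), ENNReal.ofReal_mul (by positivity)]
      rw [ENNReal.ofReal_mul (by positivity)]
      ring

lemma st_deriv_bound : ∃ K : ℝ, 0 < K ∧ ∀ x, |deriv Real.smoothTransition x| ≤ K ∧
    (x ≤ 0 ∨ 1 ≤ x → deriv Real.smoothTransition x = 0) := by
  have hz : ∀ x, (x ≤ 0 ∨ 1 ≤ x → deriv Real.smoothTransition x = 0) := by
    rintro x (hx | hx)
    · refine IsLocalMin.deriv_eq_zero (Eventually.of_forall fun y => ?_)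
      rw [Real.smoothTransition.zero_of_nonpos hx]; exact Real.smoothTransition.nonneg y
    · refine IsLocalMax.deriv_eq_zero (Eventually.of_forall fun y => ?_)
      rw [Real.smoothTransition.one_of_one_le hx]; exact Real.smoothTransition.le_one y
  have hc : Continuous (deriv Real.smoothTransition) :=
    (Real.smoothTransition.contDiff (n := 1)).continuous_deriv le_rfl
  obtain ⟨K, hK⟩ := (isCompact_Icc (a := (0 : ℝ)) (b := 1)).exists_bound_of_continuousOn
    hc.continuousOn
  refine ⟨|K| + 1, by positivity, fun x => ⟨?_, hz x⟩⟩
  by_cases hx : x ∈ Icc (0 : ℝ) 1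
  · exact (hK x hx).trans ((le_abs_self K).trans (by linarith))
  · rw [hz x]
    · simp; positivity
    · simp only [mem_Icc, not_and_or, not_le] at hx
      rcases hx with h | h
      · exact Or.inl h.le
      · exact Or.inr h.le

lemma st_comp {n : ℕ} {K : ℝ} (hK : ∀ x, |deriv Real.smoothTransition x| ≤ K ∧
    (x ≤ 0 ∨ 1 ≤ x → deriv Real.smoothTransition x = 0)) {u : En n → ℝ}
    (hu : ContDiff ℝ (⊤ : ℕ∞) u) (a c : ℝ) (hc : 0 ≤ c) (x : En n) :
    ‖fderiv ℝ (fun x => Real.smoothTransition ((u x - a) * c)) x‖ ≤ K * c * ‖fderiv ℝ u x‖ ∧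
    ((u x - a) * c ≤ 0 ∨ 1 ≤ (u x - a) * c →
      fderiv ℝ (fun x => Real.smoothTransition ((u x - a) * c)) x = 0) := by
  have h1 : HasFDerivAt u (fderiv ℝ u x) x := (hu.differentiable (by simp) x).hasFDerivAt
  have h2 : HasFDerivAt (fun x => (u x - a) * c) (c • fderiv ℝ u x) x :=
    (h1.sub_const a).mul_const c
  have h3 : HasDerivAt Real.smoothTransition (deriv Real.smoothTransition ((u x - a) * c))
      ((u x - a) * c) :=
    ((Real.smoothTransition.contDiff (n := 1)).differentiable (by simp) _).hasDerivAt
  have h4 := h3.comp_hasFDerivAt x h2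
  have h5 : fderiv ℝ (fun x => Real.smoothTransition ((u x - a) * c)) x = _ := h4.fderiv
  rw [h5]
  constructor
  · rw [norm_smul, norm_smul, Real.norm_eq_abs, Real.norm_eq_abs, abs_of_nonneg hc, ← mul_assoc]
    gcongr
    exact (hK _).1
  · intro h
    rw [(hK _).2 h, zero_smul]

lemma lse {n : ℕ} {ι : Type*} (T : Finset ι) (hT : T.Nonempty) (u : ι → En n → ℝ)
    (hu : ∀ i ∈ T, ContDiff ℝ (⊤ : ℕ∞) (u i)) (δ : ℝ) (hδ : 0 < δ) :
    ∃ L : En n → ℝ, ContDiff ℝ (⊤ : ℕ∞) L ∧ (∀ x, ∀ i ∈ T, u i x ≤ L x) ∧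
      (∀ x a, (∀ i ∈ T, u i x ≤ a) → L x ≤ a + δ) ∧
      (∀ x a, (∀ i ∈ T, ‖fderiv ℝ (u i) x‖ ≤ a) → ‖fderiv ℝ L x‖ ≤ a) := by
  have hcard : (1 : ℝ) ≤ T.card := by exact_mod_cast hT.card_pos
  obtain ⟨β, hβ, hβ'⟩ : ∃ β > 0, β⁻¹ * Real.log T.card ≤ δ := by
    have := Real.log_nonneg hcard
    refine ⟨(Real.log T.card + 1) / δ, by positivity, ?_⟩
    rw [inv_div, div_mul_eq_mul_div, div_le_iff₀ (by positivity)]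
    nlinarith
  have hE0 : ∀ x, 0 < ∑ i ∈ T, Real.exp (β * u i x) := fun x =>
    Finset.sum_pos (fun i _ => Real.exp_pos _) hT
  have hEc : ContDiff ℝ (⊤ : ℕ∞) (fun x => ∑ i ∈ T, Real.exp (β * u i x)) :=
    ContDiff.sum fun i hi => Real.contDiff_exp.comp (contDiff_const.mul (hu i hi))
  refine ⟨fun x => β⁻¹ * Real.log (∑ i ∈ T, Real.exp (β * u i x)), ?_, ?_, ?_, ?_⟩
  · exact contDiff_const.mul (hEc.log fun x => (hE0 x).ne')
  · intro x i hi
    have h1 : Real.exp (β * u i x) ≤ ∑ i ∈ T, Real.exp (β * u i x) :=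
      Finset.single_le_sum (f := fun i => Real.exp (β * u i x))
        (fun i _ => (Real.exp_pos _).le) hi
    have h2 := (Real.le_log_iff_exp_le (hE0 x)).2 h1
    show u i x ≤ β⁻¹ * Real.log (∑ i ∈ T, Real.exp (β * u i x))
    rw [inv_mul_eq_div, le_div_iff₀ hβ]; linarith
  · intro x a ha
    have h1 : ∑ i ∈ T, Real.exp (β * u i x) ≤ T.card * Real.exp (β * a) := by
      rw [← nsmul_eq_mul]
      refine Finset.sum_le_card_nsmul _ _ _ fun i hi => Real.exp_le_exp.2 ?_
      have := ha i hi
      gcongr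
    have h2 := Real.log_le_log (hE0 x) h1
    rw [Real.log_mul (by positivity) (by positivity), Real.log_exp] at h2
    calc β⁻¹ * Real.log (∑ i ∈ T, Real.exp (β * u i x))
        ≤ β⁻¹ * (Real.log T.card + β * a) := by gcongr
      _ = β⁻¹ * Real.log T.card + a := by field_simp
      _ ≤ _ := by linarith
  · intro x a ha
    have hd : HasFDerivAt (fun x => ∑ i ∈ T, Real.exp (β * u i x))
        (∑ i ∈ T, Real.exp (β * u i x) • (β • fderiv ℝ (u i) x)) x := by
      refine HasFDerivAt.fun_sum fun i hi => ?_
      exact ((((hu i hi).differentiable (by simp) x).hasFDerivAt).const_mul β).exp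
    have hd2 := (hd.log (hE0 x).ne').const_mul β⁻¹
    rw [hd2.fderiv, norm_smul, norm_smul, Real.norm_eq_abs, Real.norm_eq_abs,
      abs_of_pos (inv_pos.2 hβ), abs_of_pos (inv_pos.2 (hE0 x))]
    have : ‖∑ i ∈ T, Real.exp (β * u i x) • (β • fderiv ℝ (u i) x)‖ ≤
        (∑ i ∈ T, Real.exp (β * u i x)) * (β * a) := by
      rw [Finset.sum_mul]
      refine norm_sum_le_of_le _ fun i hi => ?_
      rw [norm_smul, norm_smul, Real.norm_eq_abs, Real.norm_eq_abs, Real.abs_exp, abs_of_pos hβ]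
      have := ha i hi
      gcongr
    calc _ ≤ β⁻¹ * ((∑ i ∈ T, Real.exp (β * u i x))⁻¹ *
          ((∑ i ∈ T, Real.exp (β * u i x)) * (β * a))) := by
          have := hE0 x
          gcongr
      _ = a := by have := (hE0 x).ne'; field_simp

/-- volume of ball as real -/
noncomputable def vb (n : ℕ) (r : ℝ) : ℝ := volume.real (closedBall (0 : En n) r)

lemma vb_pos {n : ℕ} {r : ℝ} (hr : 0 < r) : 0 < vb n r := by
  rw [vb, measureReal_def]
  exact ENNReal.toReal_pos (measure_closedBall_pos _ _ hr).ne'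
    (isCompact_closedBall _ _).measure_lt_top.ne

lemma vb_ofReal {n : ℕ} (x : En n) (r : ℝ) :
    ENNReal.ofReal (vb n r) = volume (closedBall x r) := by
  rw [vb, measureReal_def, ENNReal.ofReal_toReal (isCompact_closedBall _ _).measure_lt_top.ne,
    Measure.addHaar_closedBall_center volume x]

/-- open superset -/
def Vset {n : ℕ} (f : En n → ℝ) (α : ℝ) (b : ContDiffBump (0 : En n)) : Set (En n) :=
  {x | α * vb n b.rOut < cv f b x}

lemma Vset_open {n : ℕ} {f : En n → ℝ} (hf : LocallyIntegrable f volume) (α : ℝ)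
    (b : ContDiffBump (0 : En n)) : IsOpen (Vset f α b) :=
  isOpen_lt continuous_const (cv_contDiff hf b.contDiff b.hasCompactSupport).continuous

lemma bump_fderiv {n : ℕ} {p : ℝ} (hp : 1 ≤ p) {f : En n → ℝ} {g : En n → En n}
    (h : MemW1p p f g) (b : ContDiffBump (0 : En n)) (x : En n) :
    ‖fderiv ℝ (cv f b) x‖ₑ ≤ ∫⁻ t in closedBall x b.rOut, ‖g t‖ₑ := by
  refine (cv_fderiv_enorm hp h b.contDiff b.hasCompactSupport x).trans ?_
  rw [← lintegral_indicator measurableSet_closedBall]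
  refine lintegral_mono fun t => ?_
  by_cases ht : t ∈ closedBall x b.rOut
  · rw [indicator_of_mem ht]
    have : ‖b (x - t)‖ₑ ≤ 1 := by
      rw [← enorm_one (G := ℝ), enorm_le_iff_norm_le, norm_one, Real.norm_eq_abs,
        abs_of_nonneg b.nonneg]
      exact b.le_one
    calc _ ≤ 1 * ‖g t‖ₑ := by gcongr
      _ = _ := one_mul _
  · have : b (x - t) = 0 := b.zero_of_le_dist (by
      simp only [mem_closedBall, not_le] at ht
      rw [dist_zero_right, ← dist_eq_norm, dist_comm]; exact ht.le)
    simp [this]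

lemma capK_le {n : ℕ} {p : ℝ} {F : Set (En n)} {φ : En n → ℝ} (h1 : ContDiff ℝ (⊤ : ℕ∞) φ)
    (h2 : HasCompactSupport φ) (h3 : ∀ x ∈ F, 1 ≤ φ x) :
    capK p F ≤ ∫⁻ x, ‖fderiv ℝ φ x‖ₑ ^ p :=
  iInf₂_le_of_le φ ⟨h1, h2, h3⟩ le_rfl

lemma capK_empty {n : ℕ} {p : ℝ} (hp : 0 < p) : capK p (∅ : Set (En n)) = 0 := by
  refine le_antisymm ((capK_le (φ := fun _ => 0) contDiff_const HasCompactSupport.zero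
    (by simp)).trans ?_) (by simp)
  simp [hp]
  left; rw [enorm_eq_nnnorm]; simp

lemma main_gt {n : ℕ} {p : ℝ} (hp : 1 < p) :
    ∃ C : ℝ, 0 < C ∧ ∀ (f : En n → ℝ) (g : En n → En n), MemW1p p f g →
        ∀ α : ℝ, 0 < α → ∀ F, IsCompact F → F ⊆ ⋃ b, Vset f α b →
          capK p F ≤ ENNReal.ofReal (C / α ^ p) * ∫⁻ x, ‖g x‖ₑ ^ p := by
  obtain ⟨K, hK0, hK⟩ := st_deriv_bound
  have hp1 : 0 < p - 1 := by linarith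
  have hp0 : 0 < p := by linarith
  refine ⟨(2 * K) ^ p * (p * (2 * 4 ^ n) * (p - 1)⁻¹ * 2 ^ (p - 1)), by positivity, ?_⟩
  intro f g h α hα F hF hFU
  have hf := h.lif hp.le
  obtain ⟨T, hT⟩ := hF.elim_finite_subcover _ (fun b => Vset_open hf α b) hFU
  rcases T.eq_empty_or_nonempty with rfl | hTn
  · have : F = ∅ := by simpa using hT
    rw [this, capK_empty hp0]; simp
  have hv : ∀ b : ContDiffBump (0 : En n), 0 < vb n b.rOut := fun b => vb_pos b.rOut_pos
  set u : ContDiffBump (0 : En n) → En n → ℝ := fun b x => (vb n b.rOut)⁻¹ * cv f b x with hu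
  have hus : ∀ b, ContDiff ℝ (⊤ : ℕ∞) (u b) := fun b =>
    contDiff_const.mul (cv_contDiff hf b.contDiff b.hasCompactSupport)
  obtain ⟨L, hL, hL1, hL2, hL3⟩ := lse T hTn u (fun b _ => hus b) (α / 4) (by positivity)
  set φ : En n → ℝ := fun x => Real.smoothTransition ((L x - α / 2) * (2 / α)) with hφ
  have hφs : ContDiff ℝ (⊤ : ℕ∞) φ := Real.smoothTransition.contDiff.comp
    ((hL.sub contDiff_const).mul contDiff_const)
  have hφF : ∀ x ∈ F, 1 ≤ φ x := by
    intro x hx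
    obtain ⟨b, hb, hxb⟩ := mem_iUnion₂.1 (hT hx)
    have h1 : α ≤ u b x := by
      have : α * vb n b.rOut < cv f b x := hxb
      simp only [hu]
      rw [inv_mul_eq_div, le_div_iff₀ (hv b)]; exact this.le
    have h2 : α ≤ L x := h1.trans (hL1 x b hb)
    refine (Real.smoothTransition.one_of_one_le ?_).ge
    rw [mul_div_assoc', le_div_iff₀ hα]; linarith
  have hφc : HasCompactSupport φ := by
    have : ∀ b, ∃ R : ℝ, ∀ x, R ≤ ‖x‖ → |u b x| ≤ α / 4 := by
      intro b
      obtain ⟨R, hR⟩ := cv_decay hp.le h b.contDiff b.hasCompactSupport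
        (ε := α / 4 * vb n b.rOut) (by have := hv b; positivity)
      refine ⟨R, fun x hx => ?_⟩
      have := hR x hx
      simp only [hu, abs_mul, abs_inv, abs_of_pos (hv b)]
      rw [inv_mul_eq_div, div_le_iff₀ (hv b)]; exact this
    choose R hR using this
    refine HasCompactSupport.of_support_subset_isCompact
      (isCompact_closedBall (0 : En n) (∑ b ∈ T, |R b|)) ?_
    intro x hx
    by_contra hx'
    apply hx
    simp only [mem_closedBall, dist_zero_right, not_le] at hx'
    refine Real.smoothTransition.zero_of_nonpos ?_
    have : L x ≤ α / 4 + α / 4 := hL2 x _ fun b hb => by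
      refine (le_abs_self _).trans (hR b x ((le_abs_self _).trans (le_trans ?_ hx'.le)))
      exact Finset.single_le_sum (f := fun b => |R b|) (fun _ _ => abs_nonneg _) hb
    exact mul_nonpos_of_nonpos_of_nonneg (by linarith) (by positivity)
  refine (capK_le hφs hφc hφF).trans ?_
  -- maximal function
  obtain ⟨g', hg', hgg'⟩ := h.2.1
  set N : En n → ℝ := fun x => T.sup' hTn (fun b => ‖fderiv ℝ (u b) x‖) with hN
  have hNc : Continuous N := Continuous.finset_sup'_apply hTn fun b _ =>
    ((hus b).continuous_fderiv (by simp)).norm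
  have hN0 : ∀ x, 0 ≤ N x := fun x => by
    obtain ⟨b, hb⟩ := hTn
    exact (norm_nonneg _).trans (Finset.le_sup' (fun b => ‖fderiv ℝ (u b) x‖) hb)
  have hNS : ∀ x t, 0 < t → t < N x → ∃ r ∈ T.image (fun b => b.rOut),
      ENNReal.ofReal t * volume (closedBall x r) <
      ∫⁻ y in closedBall x r, ENNReal.ofReal ‖g' y‖ := by
    intro x t ht htN
    obtain ⟨b, hb, hbt⟩ := (Finset.lt_sup'_iff hTn).1 htN
    refine ⟨b.rOut, Finset.mem_image_of_mem _ hb, ?_⟩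
    have h1 := bump_fderiv hp.le h b x
    have h2 : fderiv ℝ (u b) x = (vb n b.rOut)⁻¹ • fderiv ℝ (cv f b) x := by
      have := ((cv_contDiff hf b.contDiff b.hasCompactSupport).differentiable
        (by simp) x).hasFDerivAt.const_mul (vb n b.rOut)⁻¹
      exact this.fderiv
    rw [h2, norm_smul, Real.norm_eq_abs, abs_inv, abs_of_pos (hv b), inv_mul_eq_div,
      lt_div_iff₀ (hv b)] at hbt
    rw [← vb_ofReal x, ← ENNReal.ofReal_mul ht.le]
    calc _ < ENNReal.ofReal ‖fderiv ℝ (cv f b) x‖ :=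
          (ENNReal.ofReal_lt_ofReal_iff_of_nonneg (by have := hv b; positivity)).2 hbt
      _ = ‖fderiv ℝ (cv f b) x‖ₑ := ofReal_norm _
      _ ≤ _ := h1
      _ = _ := by
        refine lintegral_congr_ae ?_
        filter_upwards [ae_restrict_of_ae hgg'] with y hy
        rw [hy, ofReal_norm]
  have hst := strong_type hp (fun y => ‖g' y‖) hg'.norm.measurable (fun _ => norm_nonneg _)
    (T.image (fun b => b.rOut)) (by simp [ContDiffBump.rOut_pos]) N hNc.measurable hN0 hNS
  have h6 : ∫⁻ x, ENNReal.ofReal (‖g' x‖ ^ p) = ∫⁻ x, ‖g x‖ₑ ^ p := by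
    refine lintegral_congr_ae ?_
    filter_upwards [hgg'] with y hy
    rw [hy, ← ENNReal.ofReal_rpow_of_nonneg (norm_nonneg _) hp0.le, ofReal_norm]
  rw [h6] at hst
  have h7 : ∀ x, ‖fderiv ℝ φ x‖ₑ ^ p ≤ ENNReal.ofReal ((2 * K / α) ^ p) * ENNReal.ofReal (N x ^ p) := by
    intro x
    rw [← ofReal_norm, ENNReal.ofReal_rpow_of_nonneg (norm_nonneg _) hp0.le,
      ← ENNReal.ofReal_mul (by positivity), ← Real.mul_rpow (by positivity) (hN0 x)]
    refine ENNReal.ofReal_le_ofReal (Real.rpow_le_rpow (norm_nonneg _) ?_ hp0.le)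
    refine ((st_comp hK hL (α / 2) (2 / α) (by positivity) x).1).trans ?_
    have := hL3 x (N x) fun b hb => Finset.le_sup' (fun b => ‖fderiv ℝ (u b) x‖) hb
    calc _ ≤ K * (2 / α) * N x := by gcongr
      _ = _ := by ring
  calc _ ≤ ∫⁻ x, ENNReal.ofReal ((2 * K / α) ^ p) * ENNReal.ofReal (N x ^ p) := lintegral_mono h7
    _ = ENNReal.ofReal ((2 * K / α) ^ p) * ∫⁻ x, ENNReal.ofReal (N x ^ p) :=
      lintegral_const_mul' _ _ ENNReal.ofReal_ne_top
    _ ≤ ENNReal.ofReal ((2 * K / α) ^ p) * (ENNReal.ofReal (p * (2 * 4 ^ n) * (p - 1)⁻¹ * 2 ^ (p - 1)) * ∫⁻ x, ‖g x‖ₑ ^ p) := by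
      gcongr
    _ = _ := by
      rw [← mul_assoc, ← ENNReal.ofReal_mul (by positivity), Real.div_rpow (by positivity) hα.le]
      congr 2; ring

lemma poinc_A {n : ℕ} {D : En n → ℝ≥0∞} (hD : Measurable D) (x a : En n) (r : ℝ)
    (ha : a ∈ closedBall x r) {c : ℝ} (hc : 1 / 2 ≤ c) (hc1 : c ≤ 1) :
    ∫⁻ y in closedBall x r, D ((1 - c) • a + c • y) ≤
      ENNReal.ofReal (2 ^ n) * ∫⁻ y in closedBall x r, D y := by
  have hc0 : 0 < c := by linarith
  set h : En n → ℝ≥0∞ := (closedBall x r).indicator D with hh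
  have hm : Measurable h := hD.indicator measurableSet_closedBall
  have h1 : ∫⁻ y in closedBall x r, D ((1 - c) • a + c • y) ≤
      ∫⁻ y, h ((1 - c) • a + c • y) := by
    rw [← lintegral_indicator measurableSet_closedBall]
    refine lintegral_mono fun y => ?_
    by_cases hy : y ∈ closedBall x r
    · rw [indicator_of_mem hy]
      have : (1 - c) • a + c • y ∈ closedBall x r :=
        (convex_closedBall x r) ha hy (by linarith) hc0.le (by ring)
      rw [hh, indicator_of_mem this]
    · rw [indicator_of_notMem hy]; exact zero_le
  have h2 : ∫⁻ y, h ((1 - c) • a + c • y) =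
      ENNReal.ofReal |(c ^ n)⁻¹| * ∫⁻ y, h y := by
    have e1 := lintegral_map (μ := (volume : Measure (En n)))
      (f := fun z => h ((1 - c) • a + z)) (g := fun y => c • y)
      (hm.comp (measurable_const_add _)) (measurable_const_smul c)
    rw [← e1, Measure.map_addHaar_smul volume hc0.ne', lintegral_smul_measure,
      lintegral_add_left_eq_self h, finrank_euclideanSpace_fin, smul_eq_mul]
  rw [h2, hh, lintegral_indicator measurableSet_closedBall] at h1
  refine h1.trans ?_
  gcongr
  rw [abs_of_pos (by positivity), ← inv_pow]
  gcongr
  rw [inv_le_comm₀ hc0 (by norm_num)]; linarith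

lemma poinc_pt {n : ℕ} {v : En n → ℝ} (hv : ContDiff ℝ (⊤ : ℕ∞) v) (y z : En n) :
    ‖v y - v z‖ₑ ≤ ‖y - z‖ₑ * ∫⁻ s in Icc (0 : ℝ) 1, ‖fderiv ℝ v ((1 - s) • z + s • y)‖ₑ := by
  have hd : ∀ s : ℝ, HasDerivAt (fun s : ℝ => v ((1 - s) • z + s • y))
      (fderiv ℝ v ((1 - s) • z + s • y) (y - z)) s := by
    intro s
    have h1 : HasDerivAt (fun s : ℝ => (1 - s) • z + s • y) (y - z) s := by
      have a1 : HasDerivAt (fun s : ℝ => (1 - s) • z) ((-1 : ℝ) • z) s :=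
        ((hasDerivAt_id s).const_sub 1).smul_const z
      have a2 : HasDerivAt (fun s : ℝ => s • y) ((1 : ℝ) • y) s :=
        (hasDerivAt_id s).smul_const y
      have := a1.add a2
      exact this.congr_deriv (by module)
    exact (hv.differentiable (by simp) _).hasFDerivAt.comp_hasDerivAt s h1
  have hcd : ContDiff ℝ 1 (fun s : ℝ => v ((1 - s) • z + s • y)) := by
    have : ContDiff ℝ (⊤ : ℕ∞) (fun s : ℝ => v ((1 - s) • z + s • y)) := by
      refine hv.comp ?_
      fun_prop
    exact this.of_le (by exact_mod_cast le_top)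
  have h := enorm_sub_le_lintegral_deriv_of_contDiffOn_Icc (a := 0) (b := 1)
    hcd.contDiffOn zero_le_one
  simp only [sub_self, zero_smul, one_smul, zero_add, sub_zero, add_zero] at h
  refine h.trans ?_
  rw [← lintegral_const_mul' _ _ enorm_ne_top]
  refine lintegral_mono fun s => ?_
  rw [(hd s).deriv, mul_comm]
  exact ContinuousLinearMap.le_opENorm _ _

lemma poincare {n : ℕ} {v : En n → ℝ} (hv : ContDiff ℝ (⊤ : ℕ∞) v) (x : En n) (r : ℝ)
    (hr : 0 < r) :
    ∫⁻ y in closedBall x r, ∫⁻ z in closedBall x r, ‖v y - v z‖ₑ ≤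
      ENNReal.ofReal (2 * r) * (ENNReal.ofReal (2 ^ n) * (volume (closedBall x r) *
        ∫⁻ y in closedBall x r, ‖fderiv ℝ v y‖ₑ)) := by
  set B := closedBall x r with hB
  set D : En n → ℝ≥0∞ := fun y => ‖fderiv ℝ v y‖ₑ with hD
  have hDc : Continuous D := (hv.continuous_fderiv (by simp)).enorm
  have hDm : Measurable D := hDc.measurable
  have hstep : ∀ s ∈ Icc (0 : ℝ) 1, ∫⁻ y in B, ∫⁻ z in B, D ((1 - s) • z + s • y) ≤
      ENNReal.ofReal (2 ^ n) * (volume B * ∫⁻ y in B, D y) := by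
    intro s hs
    rcases le_total (1 / 2) s with h | h
    · rw [lintegral_lintegral_swap (by
        refine (Continuous.measurable ?_).aemeasurable
        have : Continuous fun p : En n × En n => (1 - s) • p.2 + s • p.1 := by fun_prop
        exact hDc.comp this)]
      calc _ ≤ ∫⁻ z in B, ENNReal.ofReal (2 ^ n) * ∫⁻ y in B, D y := by
            refine setLIntegral_mono_ae' measurableSet_closedBall (Eventually.of_forall ?_)
            intro z hz
            exact poinc_A hDm x z r hz h hs.2
        _ = _ := by rw [setLIntegral_const]; ring
    · calc _ ≤ ∫⁻ y in B, ENNReal.ofReal (2 ^ n) * ∫⁻ y in B, D y := by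
            refine setLIntegral_mono_ae' measurableSet_closedBall (Eventually.of_forall ?_)
            intro y hy
            have := poinc_A hDm x y r hy (c := 1 - s) (by linarith) (by linarith [hs.1])
            simpa [add_comm] using this
        _ = _ := by rw [setLIntegral_const]; ring
  have hpt : ∀ y ∈ B, ∀ z ∈ B, ‖v y - v z‖ₑ ≤
      ENNReal.ofReal (2 * r) * ∫⁻ s in Icc (0 : ℝ) 1, D ((1 - s) • z + s • y) := by
    intro y hy z hz
    refine (poinc_pt hv y z).trans ?_
    gcongr
    rw [← ofReal_norm, ← dist_eq_norm]
    refine ENNReal.ofReal_le_ofReal ((dist_triangle_right y z x).trans ?_)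
    rw [hB, mem_closedBall] at hy hz; linarith
  have hc3 : Continuous fun p : (En n × ℝ) × En n => D ((1 - p.1.2) • p.2 + p.1.2 • p.1.1) := by
    refine hDc.comp ?_; fun_prop
  have hc4 : Continuous fun p : (En n × En n) × ℝ => D ((1 - p.2) • p.1.2 + p.2 • p.1.1) := by
    refine hDc.comp ?_; fun_prop
  calc _ ≤ ∫⁻ y in B, ∫⁻ z in B, ENNReal.ofReal (2 * r) *
        ∫⁻ s in Icc (0 : ℝ) 1, D ((1 - s) • z + s • y) := by
        refine setLIntegral_mono_ae' measurableSet_closedBall (Eventually.of_forall ?_)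
        intro y hy
        refine setLIntegral_mono_ae' measurableSet_closedBall (Eventually.of_forall ?_)
        intro z hz
        exact hpt y hy z hz
    _ = ENNReal.ofReal (2 * r) * ∫⁻ y in B, ∫⁻ z in B, 
        ∫⁻ s in Icc (0 : ℝ) 1, D ((1 - s) • z + s • y) := by
        rw [← lintegral_const_mul' _ _ ENNReal.ofReal_ne_top]
        refine lintegral_congr fun y => ?_
        rw [← lintegral_const_mul' _ _ ENNReal.ofReal_ne_top]
    _ = ENNReal.ofReal (2 * r) * ∫⁻ y in B, ∫⁻ s in Icc (0 : ℝ) 1, ∫⁻ z in B, 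
         D ((1 - s) • z + s • y) := by
        congr 1
        refine lintegral_congr fun y => ?_
        rw [lintegral_lintegral_swap]
        refine (Continuous.measurable ?_).aemeasurable
        exact hc4.comp (f := fun q : En n × ℝ => ((y, q.1), q.2)) (by fun_prop)
    _ = ENNReal.ofReal (2 * r) * ∫⁻ s in Icc (0 : ℝ) 1, ∫⁻ y in B, ∫⁻ z in B, 
         D ((1 - s) • z + s • y) := by
        congr 1
        rw [lintegral_lintegral_swap]
        exact (hc3.measurable.lintegral_prod_right' (ν := volume.restrict B)).aemeasurable
    _ ≤ ENNReal.ofReal (2 * r) * ∫⁻ s in Icc (0 : ℝ) 1,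
          ENNReal.ofReal (2 ^ n) * (volume B * ∫⁻ y in B, D y) := by
        gcongr 1
        exact setLIntegral_mono_ae' measurableSet_Icc (Eventually.of_forall hstep)
    _ = _ := by rw [setLIntegral_const]; simp

lemma poinc_h {n : ℕ} {v : En n → ℝ} (hv : ContDiff ℝ (⊤ : ℕ∞) v) (x : En n) (r : ℝ)
    (hr : 0 < r) (h : En n → ℝ≥0∞) (Z : Set (En n)) (hZ : MeasurableSet Z)
    (hh : ∀ y, ∀ z ∈ Z, h y ≤ ‖v y - v z‖ₑ) {δ₁ δ₂ : ℝ} (h1 : 0 < δ₁) (h2 : 0 < δ₂)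
    (hδ₁ : ENNReal.ofReal δ₁ * volume (closedBall x r) ≤ ∫⁻ y in closedBall x r, h y)
    (hδ₂ : ENNReal.ofReal δ₂ * volume (closedBall x r) ≤ volume (Z ∩ closedBall x r)) :
    volume (closedBall x r) ≤ ENNReal.ofReal (2 * r * 2 ^ n / (δ₁ * δ₂)) *
      ∫⁻ y in closedBall x r, ‖fderiv ℝ v y‖ₑ := by
  have hP := poincare hv x r hr
  set B := closedBall x r with hB
  set I := ∫⁻ y in B, ‖fderiv ℝ v y‖ₑ with hI
  have hB0 : volume B ≠ 0 := (measure_closedBall_pos _ _ hr).ne'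
  have hBt : volume B ≠ ∞ := (isCompact_closedBall _ _).measure_lt_top.ne
  have e1 : (∫⁻ y in B, h y) * volume (Z ∩ B) ≤
      ∫⁻ y in B, ∫⁻ z in B, ‖v y - v z‖ₑ := by
    have hZt : volume (Z ∩ B) ≠ ∞ := ((measure_mono inter_subset_right).trans_lt hBt.lt_top).ne
    rw [← lintegral_mul_const' _ _ hZt]
    refine lintegral_mono fun y => ?_
    calc h y * volume (Z ∩ B) = ∫⁻ z in Z ∩ B, h y := by rw [setLIntegral_const]
      _ ≤ ∫⁻ z in Z ∩ B, ‖v y - v z‖ₑ :=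
          setLIntegral_mono_ae' (hZ.inter measurableSet_closedBall)
            (Eventually.of_forall fun z hz => hh y z hz.1)
      _ ≤ _ := lintegral_mono_set inter_subset_right
  have e2 : volume B * (ENNReal.ofReal (δ₁ * δ₂) * volume B) ≤
      volume B * (ENNReal.ofReal (2 * r * 2 ^ n) * I) := by
    calc _ = (ENNReal.ofReal δ₁ * volume B) * (ENNReal.ofReal δ₂ * volume B) := by
          rw [ENNReal.ofReal_mul h1.le]; ring
      _ ≤ (∫⁻ y in B, h y) * volume (Z ∩ B) := mul_le_mul' hδ₁ hδ₂
      _ ≤ _ := e1.trans hP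
      _ = _ := by rw [ENNReal.ofReal_mul (by positivity : (0:ℝ) ≤ 2 * r)]; ring
  have e3 := (ENNReal.mul_le_mul_iff_right hB0 hBt).1 e2
  have hd : 0 < δ₁ * δ₂ := by positivity
  rw [ENNReal.ofReal_div_of_pos hd, ENNReal.mul_comm_div, ← mul_div_assoc,
    ENNReal.le_div_iff_mul_le (Or.inl (by simpa using hd)) (Or.inl ENNReal.ofReal_ne_top), mul_comm]
  exact e3

lemma boxing (n : ℕ) : ∃ C : ℝ, 0 < C ∧ ∀ (w : En n → ℝ≥0∞) (F : Set (En n)),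
    IsCompact F → (∀ x ∈ F, ∃ r : ℝ, 0 < r ∧ volume (closedBall x r) ≤
      ENNReal.ofReal r * ∫⁻ y in closedBall x r, w y) →
    capK 1 F ≤ ENNReal.ofReal C * ∫⁻ y, w y := by
  classical
  let η : ContDiffBump (0 : En n) := ⟨1, 2, one_pos, one_lt_two⟩
  have hηc : Continuous (fderiv ℝ η) := (η.contDiff (n := 1)).continuous_fderiv (by simp)
  obtain ⟨K, hK⟩ := (η.hasCompactSupport.fderiv (𝕜 := ℝ)).exists_bound_of_continuous hηc
  have hK0 : 0 ≤ K := (norm_nonneg _).trans (hK 0)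
  refine ⟨(K + 1) * 8 ^ n, by positivity, ?_⟩
  intro w F hF hx
  choose! r hr0 hr using hx
  obtain ⟨T, hTF, hT⟩ := hF.elim_nhds_subcover (fun x => ball x (r x))
    (fun x hx => ball_mem_nhds x (hr0 x hx))
  obtain ⟨R, hR⟩ : ∃ R, ∀ a ∈ (T : Set (En n)), r a ≤ R := by
    obtain ⟨R, hR⟩ := (T.image r).bddAbove
    exact ⟨R, fun a ha => hR (by simpa using ⟨a, ha, rfl⟩)⟩
  obtain ⟨S, hST, hSd, hS⟩ := Vitali.exists_disjoint_subfamily_covering_enlargement_closedBall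
    (T : Set (En n)) id r R hR 4 (by norm_num)
  have hSf : S.Finite := T.finite_toSet.subset hST
  lift S to Finset (En n) using hSf
  simp only [id] at hSd hS
  have hrS : ∀ c ∈ S, 0 < r c := fun c hc => hr0 c (hTF c (hST hc))
  set ηc : En n → En n → ℝ := fun c y => η ((4 * r c)⁻¹ • (y - c)) with hηdef
  have hs : ∀ c, ContDiff ℝ (⊤ : ℕ∞) (ηc c) := fun c => by
    refine η.contDiff.comp ?_
    fun_prop
  have hdb : ∀ c ∈ S, ∀ y, ‖fderiv ℝ (ηc c) y‖ₑ ≤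
      (closedBall c (8 * r c)).indicator (fun _ => ENNReal.ofReal ((K + 1) * (r c)⁻¹)) y := by
    intro c hc y
    have hrc := hrS c hc
    by_cases hy : y ∈ closedBall c (8 * r c)
    · rw [indicator_of_mem hy, ← ofReal_norm]
      refine ENNReal.ofReal_le_ofReal ?_
      have h1 : HasFDerivAt (fun y : En n => (4 * r c)⁻¹ • (y - c))
          ((4 * r c)⁻¹ • ContinuousLinearMap.id ℝ (En n)) y :=
        ((hasFDerivAt_id y).sub_const c).fun_const_smul _
      have h2 : HasFDerivAt η (fderiv ℝ η ((4 * r c)⁻¹ • (y - c))) ((4 * r c)⁻¹ • (y - c)) :=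
        ((η.contDiff (n := 1)).differentiable (by simp) _).hasFDerivAt
      have h3 := (h2.comp y h1).fderiv
      have h4 : fderiv ℝ (ηc c) y = _ := h3
      rw [h4]
      refine (ContinuousLinearMap.opNorm_comp_le _ _).trans ?_
      have h5 : ‖(4 * r c)⁻¹ • ContinuousLinearMap.id ℝ (En n)‖ ≤ (r c)⁻¹ := by
        rw [norm_smul, norm_inv, Real.norm_of_nonneg (by positivity)]
        calc _ ≤ (4 * r c)⁻¹ * 1 := by
              gcongr; exact ContinuousLinearMap.norm_id_le
          _ ≤ _ := by
              rw [mul_one]; exact inv_anti₀ hrc (by linarith)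
      gcongr
      exact (hK _).trans (by linarith)
    · rw [indicator_of_notMem hy]
      have : fderiv ℝ (ηc c) y = 0 := by
        refine HasFDerivAt.fderiv ?_
        refine (hasFDerivAt_const (0 : ℝ) y).congr_of_eventuallyEq ?_
        filter_upwards [isClosed_closedBall.isOpen_compl.mem_nhds hy] with z hz
        refine η.zero_of_le_dist ?_
        rw [dist_zero_right, norm_smul, norm_inv, Real.norm_of_nonneg (by positivity),
          ← dist_eq_norm]
        simp only [mem_compl_iff, mem_closedBall, not_le] at hz
        rw [inv_mul_eq_div, le_div_iff₀ (by positivity)]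
        show 2 * (4 * r c) ≤ _
        linarith
      rw [this, enorm_eq_nnnorm]; simp
  have hle := capK_le (p := 1) (F := F) (φ := fun y => ∑ c ∈ S, ηc c y)
    (ContDiff.sum fun c _ => hs c) ?_ ?_
  · refine hle.trans ?_
    calc ∫⁻ y, ‖fderiv ℝ (fun y => ∑ c ∈ S, ηc c y) y‖ₑ ^ (1 : ℝ)
        ≤ ∫⁻ y, ∑ c ∈ S, ‖fderiv ℝ (ηc c) y‖ₑ := by
          refine lintegral_mono fun y => ?_
          rw [ENNReal.rpow_one, fderiv_fun_sum fun c _ => (hs c).differentiable (by simp) y]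
          simp only [enorm_eq_nnnorm]
          exact_mod_cast nnnorm_sum_le _ _
      _ ≤ ∑ c ∈ S, ∫⁻ y, ‖fderiv ℝ (ηc c) y‖ₑ := by
          rw [lintegral_finsetSum]
          intro c _
          exact ((hs c).continuous_fderiv (by simp)).enorm.measurable
      _ ≤ ∑ c ∈ S, ENNReal.ofReal ((K + 1) * 8 ^ n) * ∫⁻ y in closedBall c (r c), w y := by
          refine Finset.sum_le_sum fun c hc => ?_
          have hrc := hrS c hc
          calc _ ≤ _ := lintegral_mono (hdb c hc)
            _ = ENNReal.ofReal ((K + 1) * (r c)⁻¹) * volume (closedBall c (8 * r c)) := by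
              rw [lintegral_indicator measurableSet_closedBall, setLIntegral_const]
            _ = ENNReal.ofReal ((K + 1) * (r c)⁻¹ * 8 ^ n) * volume (closedBall c (r c)) := by
              rw [Measure.addHaar_closedBall_mul volume c (by norm_num) hrc.le,
                finrank_euclideanSpace_fin, ← mul_assoc, ← ENNReal.ofReal_mul (by positivity),
                Measure.addHaar_closedBall_center volume c]
            _ ≤ ENNReal.ofReal ((K + 1) * (r c)⁻¹ * 8 ^ n) *
                (ENNReal.ofReal (r c) * ∫⁻ y in closedBall c (r c), w y) := by
              gcongr; exact hr c (hTF c (hST hc))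
            _ = _ := by
              rw [← mul_assoc, ← ENNReal.ofReal_mul (by positivity)]
              congr 2
              field_simp
      _ = ENNReal.ofReal ((K + 1) * 8 ^ n) * ∫⁻ y in ⋃ c ∈ S, closedBall c (r c), w y := by
          rw [← Finset.mul_sum, lintegral_biUnion_finset hSd
            (fun c _ => measurableSet_closedBall)]
      _ ≤ _ := mul_le_mul' le_rfl (setLIntegral_le_lintegral _ _)
  · refine HasCompactSupport.intro
      (S.isCompact_biUnion fun c _ => isCompact_closedBall c (8 * r c)) fun y hy => ?_
    refine Finset.sum_eq_zero fun c hc => ?_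
    have hrc := hrS c hc
    have : y ∉ closedBall c (8 * r c) := fun h => hy (mem_biUnion hc h)
    refine η.zero_of_le_dist ?_
    rw [dist_zero_right, norm_smul, norm_inv, Real.norm_of_nonneg (by positivity),
      ← dist_eq_norm]
    simp only [mem_closedBall, not_le] at this
    rw [inv_mul_eq_div, le_div_iff₀ (by positivity)]
    show 2 * (4 * r c) ≤ _
    linarith
  · intro y hy
    obtain ⟨a, ha, hya⟩ := mem_iUnion₂.1 (hT hy)
    obtain ⟨c, hc, hac⟩ := hS a ha
    have hyc : y ∈ closedBall c (4 * r c) := hac (ball_subset_closedBall hya)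
    have hrc := hrS c hc
    have h1 : ηc c y = 1 := by
      refine η.one_of_mem_closedBall ?_
      rw [mem_closedBall, dist_zero_right, norm_smul, norm_inv,
        Real.norm_of_nonneg (by positivity), ← dist_eq_norm, inv_mul_eq_div,
        div_le_iff₀ (by positivity)]
      show _ ≤ 1 * _
      rw [mem_closedBall] at hyc; linarith
    rw [← h1]
    exact Finset.single_le_sum (f := fun c => ηc c y) (fun c _ => η.nonneg) hc

lemma mR_le {n : ℕ} {A B : Set (En n)} (hA : volume A ≠ ∞) (hB : volume B ≠ ∞) {δ : ℝ}
    (hδ : 0 ≤ δ)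
    (h : δ * volume.real A ≤ volume.real B) : ENNReal.ofReal δ * volume A ≤ volume B := by
  have := ENNReal.ofReal_le_ofReal h
  rwa [ENNReal.ofReal_mul hδ, ofReal_measureReal hA, ofReal_measureReal hB] at this

lemma caseA {n : ℕ} {u : En n → ℝ} (hu : ContDiff ℝ (⊤ : ℕ∞) u) (b : ContDiffBump (0 : En n))
    (x : En n) {α : ℝ} (hα : 0 < α) (hx : α * vb n b.rOut ≤ cv u b x)
    (hh : volume.real (closedBall x b.rOut) ≤
      2 * volume.real ({y | u y ≤ α / 2} ∩ closedBall x b.rOut)) :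
    volume (closedBall x b.rOut) ≤ ENNReal.ofReal (2 * b.rOut * 2 ^ n / (α / 2 * (1 / 2))) *
      ∫⁻ y in closedBall x b.rOut, ‖fderiv ℝ u y‖ₑ := by
  set B := closedBall x b.rOut with hB
  have hBt : volume B ≠ ∞ := (isCompact_closedBall _ _).measure_lt_top.ne
  have hvb : volume.real B = vb n b.rOut := by
    rw [measureReal_def, ← vb_ofReal, ENNReal.toReal_ofReal (vb_pos b.rOut_pos).le]
  refine poinc_h hu x b.rOut b.rOut_pos (fun y => ENNReal.ofReal (u y - α / 2))
    {y | u y ≤ α / 2} (isClosed_le hu.continuous continuous_const).measurableSet ?_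
    (by positivity) (by norm_num) ?_ ?_
  · intro y z hz
    rw [← ofReal_norm]
    refine ENNReal.ofReal_le_ofReal ((?_ : _ ≤ u y - u z).trans (le_abs_self _))
    have : u z ≤ α / 2 := hz
    linarith
  · have hc1 : Continuous fun y => max (u y - α / 2) 0 :=
      (hu.continuous.sub continuous_const).max continuous_const
    have hi1 : IntegrableOn (fun y => max (u y - α / 2) 0) B :=
      hc1.continuousOn.integrableOn_compact (isCompact_closedBall _ _)
    have hi0 : IntegrableOn (fun _ : En n => α / 2) B := integrableOn_const hBt
    have h1 : cv u b x ≤ ∫ t, B.indicator (fun y => α / 2 + max (u y - α / 2) 0) t := by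
      refine integral_mono ?_ ((hi0.add hi1).integrable_indicator measurableSet_closedBall) ?_
      · have := cv_integrable (hu.continuous.locallyIntegrable (μ := volume)) b.continuous
          b.hasCompactSupport x
        simpa [mul_comm] using this
      · intro t
        by_cases ht : t ∈ B
        · show u t * b (x - t) ≤ _
          rw [indicator_of_mem ht]
          have h2 : u t ≤ α / 2 + max (u t - α / 2) 0 := by
            have := le_max_left (u t - α / 2) 0; linarith
          have h3 : 0 ≤ α / 2 + max (u t - α / 2) 0 := by
            have := le_max_right (u t - α / 2) 0; linarith
          have h4 : 0 ≤ b (x - t) := b.nonneg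
          have h5 : b (x - t) ≤ 1 := b.le_one
          nlinarith
        · show u t * b (x - t) ≤ _
          rw [indicator_of_notMem ht]
          have : b (x - t) = 0 := b.zero_of_le_dist (by
            simp only [hB, mem_closedBall, not_le] at ht
            rw [dist_zero_right, ← dist_eq_norm, dist_comm]; exact ht.le)
          simp [this]
    rw [integral_indicator measurableSet_closedBall, integral_add hi0 hi1, setIntegral_const,
      hvb, smul_eq_mul] at h1
    have h6 : α / 2 * vb n b.rOut ≤ ∫ y in B, max (u y - α / 2) 0 := by linarith
    have h7 := ENNReal.ofReal_le_ofReal h6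
    rw [ofReal_integral_eq_lintegral_ofReal hi1 (Eventually.of_forall fun y => le_max_right _ _),
      ENNReal.ofReal_mul (by positivity), vb_ofReal x] at h7
    refine h7.trans (lintegral_mono fun y => ?_)
    rw [ENNReal.ofReal_max]; simp
  · refine mR_le hBt ((measure_mono inter_subset_right).trans_lt hBt.lt_top).ne (by norm_num) ?_
    linarith

lemma caseB {n : ℕ} (hn : 0 < n) {v : En n → ℝ} (hv : ContDiff ℝ (⊤ : ℕ∞) v)
    {D Z : Set (En n)} (hD : MeasurableSet D) (hZ : MeasurableSet Z) (hDt : volume D ≠ ∞)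
    (h1 : ∀ y ∈ D, v y = 1) (h0 : ∀ z ∈ Z, v z = 0) {ρ : ℝ} (hρ : 0 < ρ)
    (hDZ : volume (D ∪ Z)ᶜ ≤ ENNReal.ofReal (vb n ρ / 4)) (x : En n)
    (hx : volume.real (closedBall x ρ) < 2 * volume.real (D ∩ closedBall x ρ)) :
    ∃ r : ℝ, 0 < r ∧ volume (closedBall x r) ≤ ENNReal.ofReal (16 * 4 ^ n * r) *
      ∫⁻ y in closedBall x r, ‖fderiv ℝ v y‖ₑ := by
  classical
  have hBt : ∀ r, volume (closedBall x r) ≠ ∞ := fun r =>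
    (isCompact_closedBall _ _).measure_lt_top.ne
  have hit : ∀ (S : Set (En n)) r, volume (S ∩ closedBall x r) ≠ ∞ := fun S r =>
    ((measure_mono inter_subset_right).trans_lt (hBt r).lt_top).ne
  have hvb : ∀ r, 0 < r → volume.real (closedBall x r) = vb n r := fun r hr => by
    rw [measureReal_def, ← vb_ofReal, ENNReal.toReal_ofReal (vb_pos hr).le]
  have hscale : ∀ r, 0 < r → volume.real (closedBall x (2 * r)) =
      2 ^ n * volume.real (closedBall x r) := by
    intro r hr
    rw [measureReal_def, measureReal_def,
      Measure.addHaar_closedBall_mul volume x (by norm_num) hr.le,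
      finrank_euclideanSpace_fin, Measure.addHaar_closedBall_center volume x r, ENNReal.toReal_mul,
      ENNReal.toReal_ofReal (by positivity)]
  set P : ℕ → Prop := fun k => volume.real (closedBall x (2 ^ k * ρ)) <
    2 * volume.real (D ∩ closedBall x (2 ^ k * ρ)) with hP
  have hP0 : P 0 := by simpa [hP] using hx
  have hgrow : ∀ k : ℕ, (2 : ℝ) ^ k * vb n ρ ≤ volume.real (closedBall x (2 ^ k * ρ)) := by
    intro k
    induction k with
    | zero => simp [hvb ρ hρ]
    | succ k ih =>
      rw [pow_succ', mul_assoc 2 _ ρ, hscale _ (by positivity), mul_assoc]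
      have : (2 : ℝ) ≤ 2 ^ n := by
        calc (2 : ℝ) = 2 ^ 1 := (pow_one _).symm
          _ ≤ 2 ^ n := pow_le_pow_right₀ (by norm_num) hn
      have h0 : 0 ≤ 2 ^ k * vb n ρ := by have := vb_pos (n := n) hρ; positivity
      gcongr
  have hex : ∃ k, ¬ P k := by
    obtain ⟨k, hk⟩ := pow_unbounded_of_one_lt (2 * volume.real D / vb n ρ) (one_lt_two (α := ℝ))
    refine ⟨k, not_lt.2 ?_⟩
    rw [div_lt_iff₀ (vb_pos hρ)] at hk
    refine le_trans ?_ (hk.le.trans (hgrow k))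
    gcongr
    exact inter_subset_left
  obtain ⟨k, hk1, hk2⟩ : ∃ k, P k ∧ ¬ P (k + 1) := by
    by_contra! hcon
    obtain ⟨k, hk⟩ := hex
    exact hk (Nat.rec hP0 (fun k ih => hcon k ih) k)
  set R := (2 : ℝ) ^ k * ρ with hR
  have hR0 : 0 < R := by positivity
  have hR2 : (2 : ℝ) ^ (k + 1) * ρ = 2 * R := by rw [hR]; ring
  simp only [hP, hR2, not_lt] at hk1 hk2
  refine ⟨2 * R, by positivity, ?_⟩
  have hmono : volume.real (D ∩ closedBall x R) ≤ volume.real (D ∩ closedBall x (2 * R)) :=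
    measureReal_mono (inter_subset_inter_right _ (closedBall_subset_closedBall (by linarith)))
      (hit _ _)
  have hsc := hscale R hR0
  have hDlow : ((2 : ℝ) ^ (n + 1))⁻¹ * volume.real (closedBall x (2 * R)) ≤
      volume.real (D ∩ closedBall x (2 * R)) := by
    rw [hsc, inv_mul_le_iff₀ (by positivity), pow_succ, mul_assoc]
    gcongr
    linarith
  have hCb : volume.real (D ∪ Z)ᶜ ≤ volume.real (closedBall x (2 * R)) / 4 := by
    have e1 : volume.real (D ∪ Z)ᶜ ≤ vb n ρ / 4 := by
      rw [measureReal_def]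
      exact ENNReal.toReal_le_of_le_ofReal (by have := vb_pos (n := n) hρ; positivity) hDZ
    have e2 : vb n ρ ≤ volume.real (closedBall x (2 * R)) := by
      rw [← hvb ρ hρ]
      refine measureReal_mono (closedBall_subset_closedBall ?_) (hBt _)
      have : (1 : ℝ) ≤ 2 ^ k := one_le_pow₀ (by norm_num)
      nlinarith
    linarith
  have hZlow : 1 / 4 * volume.real (closedBall x (2 * R)) ≤
      volume.real (Z ∩ closedBall x (2 * R)) := by
    have hct : volume (D ∪ Z)ᶜ ≠ ∞ := (hDZ.trans_lt ENNReal.ofReal_lt_top).ne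
    have hcov : closedBall x (2 * R) ⊆ (D ∩ closedBall x (2 * R)) ∪
        ((Z ∩ closedBall x (2 * R)) ∪ (D ∪ Z)ᶜ) := by
      intro y hy
      by_cases h1 : y ∈ D
      · exact Or.inl ⟨h1, hy⟩
      · by_cases h2 : y ∈ Z
        · exact Or.inr (Or.inl ⟨h2, hy⟩)
        · exact Or.inr (Or.inr (by simp [h1, h2]))
    have e1 := measureReal_mono (μ := volume) hcov
      (by simp only [ne_eq, measure_union_eq_top_iff, hit, hct, or_self, not_false_eq_true])
    have e2 := measureReal_union_le (μ := volume) (D ∩ closedBall x (2 * R))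
      ((Z ∩ closedBall x (2 * R)) ∪ (D ∪ Z)ᶜ)
    have e3 := measureReal_union_le (μ := volume) (Z ∩ closedBall x (2 * R)) (D ∪ Z)ᶜ
    linarith
  have hfin := poinc_h hv x (2 * R) (by positivity) (D.indicator fun _ => 1) Z hZ ?_
    (δ₁ := ((2 : ℝ) ^ (n + 1))⁻¹) (δ₂ := 1 / 4) (by positivity) (by norm_num) ?_ ?_
  · refine hfin.trans_eq ?_
    congr 2
    have : (4 : ℝ) ^ n = 2 ^ n * 2 ^ n := by rw [← mul_pow]; norm_num
    rw [this]
    field_simp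
    ring
  · intro y z hz
    by_cases hy : y ∈ D
    · rw [indicator_of_mem hy, h1 y hy, h0 z hz]; simp
    · rw [indicator_of_notMem hy]; exact zero_le
  · rw [lintegral_indicator hD, setLIntegral_const, one_mul, Measure.restrict_apply hD]
    exact mR_le (hBt _) (hit _ _) (by positivity) hDlow
  · exact mR_le (hBt _) (hit _ _) (by norm_num) hZlow

lemma pigeon {X : Type*} [MeasurableSpace X] (μ ν : Measure X) (S : ℕ → Set X) (A : Set X)
    (hS : ∀ j, MeasurableSet (S j)) (hd : Pairwise (Function.onFun Disjoint S))
    {m : ℕ} (hm : 0 < m) (hSA : ∀ j, j < m → S j ⊆ A)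
    (hμ : μ A ≠ ∞) (hν : ν A ≠ ∞) :
    ∃ j, j < m ∧ μ.real (S j) ≤ 2 * μ.real A / m ∧ ν.real (S j) ≤ 2 * ν.real A / m := by
  have key : ∀ κ : Measure X, κ A ≠ ∞ → ∑ j ∈ Finset.range m, κ.real (S j) ≤ κ.real A := by
    intro κ hκ
    rw [← measureReal_biUnion_finset (fun i _ j _ hij => hd hij) (fun j _ => hS j)
      (fun j hj => ((measure_mono (hSA j (Finset.mem_range.1 hj))).trans_lt hκ.lt_top).ne)]
    exact measureReal_mono (iUnion₂_subset fun j hj => hSA j (Finset.mem_range.1 hj)) hκ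
  have hsum : ∑ j ∈ Finset.range m, (μ.real (S j) / μ.real A + ν.real (S j) / ν.real A) ≤
      ∑ j ∈ Finset.range m, (2 : ℝ) / m := by
    rw [Finset.sum_add_distrib, ← Finset.sum_div, ← Finset.sum_div]
    have h1 := div_le_one_of_le₀ (key μ hμ) measureReal_nonneg
    have h2 := div_le_one_of_le₀ (key ν hν) measureReal_nonneg
    have : ∑ j ∈ Finset.range m, (2 : ℝ) / m = 2 := by
      rw [Finset.sum_const, Finset.card_range, nsmul_eq_mul]
      field_simp
    linarith
  obtain ⟨j, hj, hle⟩ := Finset.exists_le_of_sum_le ⟨0, Finset.mem_range.2 hm⟩ hsum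
  have hjm := Finset.mem_range.1 hj
  have fin : ∀ κ : Measure X, κ A ≠ ∞ → κ.real (S j) / κ.real A ≤ 2 / m →
      κ.real (S j) ≤ 2 * κ.real A / m := by
    intro κ hκ h
    rcases (measureReal_nonneg (μ := κ) (s := A)).eq_or_lt with h0 | h0
    · have := measureReal_mono (hSA j hjm) hκ
      rw [← h0] at this ⊢
      simpa using this
    · rw [div_le_iff₀ h0] at h
      linarith [mul_div_right_comm 2 (κ.real A) (m : ℝ)]
  have p1 : 0 ≤ μ.real (S j) / μ.real A := by positivity
  have p2 : 0 ≤ ν.real (S j) / ν.real A := by positivity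
  exact ⟨j, hjm, fin μ hμ (by linarith), fin ν hν (by linarith)⟩

lemma band {n : ℕ} {u : En n → ℝ} (hu : ContDiff ℝ (⊤ : ℕ∞) u) {α : ℝ} (hα : 0 < α)
    (hM : volume {x | α / 4 < u x} ≠ ∞) (hI : ∫⁻ x, ‖fderiv ℝ u x‖ₑ ≠ ∞) {ε : ℝ} (hε : 0 < ε) :
    ∃ t h : ℝ, 0 < h ∧ α / 4 ≤ t ∧ t + h ≤ α / 2 ∧
      volume {x | t < u x ∧ u x < t + h} ≤ ENNReal.ofReal ε ∧
      ENNReal.ofReal h⁻¹ * ∫⁻ x in {x | t < u x ∧ u x < t + h}, ‖fderiv ℝ u x‖ₑ ≤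
        ENNReal.ofReal (8 / α) * ∫⁻ x, ‖fderiv ℝ u x‖ₑ := by
  set A := {x | α / 4 < u x} with hA
  set I := ∫⁻ x, ‖fderiv ℝ u x‖ₑ with hIdef
  obtain ⟨m, hm⟩ := exists_nat_gt (2 * volume.real A / ε)
  have hm0 : 0 < m := by
    have : (0 : ℝ) < m := lt_of_le_of_lt (by positivity) hm
    exact_mod_cast this
  have hmR : (0 : ℝ) < m := by exact_mod_cast hm0
  set h := α / (4 * m) with hh
  have hh0 : 0 < h := by positivity
  have hmh : m * h = α / 4 := by rw [hh]; field_simp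
  set S : ℕ → Set (En n) := fun j => {x | α / 4 + j * h < u x ∧ u x < α / 4 + j * h + h} with hS
  have hSm : ∀ j, MeasurableSet (S j) := fun j =>
    ((isOpen_lt continuous_const hu.continuous).inter
      (isOpen_lt hu.continuous continuous_const)).measurableSet
  have hdis : ∀ i j, i < j → Disjoint (S i) (S j) := by
    intro i j hij
    rw [Set.disjoint_left]
    rintro x ⟨_, h1⟩ ⟨h2, _⟩
    have : (i : ℝ) + 1 ≤ j := by exact_mod_cast hij
    nlinarith
  have hd : Pairwise (Function.onFun Disjoint S) := by
    intro i j hij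
    rcases lt_or_gt_of_ne hij with h | h
    · exact hdis i j h
    · exact (hdis j i h).symm
  set ν : Measure (En n) := volume.withDensity fun x => ‖fderiv ℝ u x‖ₑ with hν
  have hνu : ν univ = I := by rw [hν, withDensity_apply _ MeasurableSet.univ, Measure.restrict_univ]
  have hνA : ν A ≠ ∞ := ((measure_mono (subset_univ A)).trans_lt (hνu ▸ hI.lt_top)).ne
  have hνS : ∀ s : Set (En n), ν s ≠ ∞ := fun s =>
    ((measure_mono (subset_univ s)).trans_lt (hνu ▸ hI.lt_top)).ne
  obtain ⟨j, hj, hj1, hj2⟩ := pigeon volume ν S A hSm hd hm0 (by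
    rintro j - x ⟨hx, _⟩
    show α / 4 < u x
    have : 0 ≤ j * h := by positivity
    linarith) hM hνA
  have hjh : (j : ℝ) * h + h ≤ α / 4 := by
    have : (j : ℝ) + 1 ≤ m := by exact_mod_cast hj
    rw [← hmh]; nlinarith
  have hSt : volume (S j) ≠ ∞ := ((measure_mono (by
    rintro x ⟨hx, _⟩
    show α / 4 < u x
    have : 0 ≤ j * h := by positivity
    linarith)).trans_lt hM.lt_top).ne
  refine ⟨α / 4 + j * h, h, hh0, by have : 0 ≤ j * h := by positivity
                                    linarith, by linarith, ?_, ?_⟩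
  · rw [← ofReal_measureReal hSt]
    refine ENNReal.ofReal_le_ofReal (hj1.trans ?_)
    rw [div_lt_iff₀ hε] at hm
    rw [div_le_iff₀ hmR]; linarith
  · have e1 : ∫⁻ x in S j, ‖fderiv ℝ u x‖ₑ = ν (S j) := by rw [hν, withDensity_apply _ (hSm j)]
    have e2 : ν.real A ≤ I.toReal := by
      rw [← hνu]; exact measureReal_mono (subset_univ _) (hνS _)
    show ENNReal.ofReal h⁻¹ * ∫⁻ x in S j, ‖fderiv ℝ u x‖ₑ ≤ _
    rw [e1, ← ofReal_measureReal (hνS _), ← ENNReal.ofReal_toReal hI,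
      ← ENNReal.ofReal_mul (by positivity), ← ENNReal.ofReal_mul (by positivity)]
    refine ENNReal.ofReal_le_ofReal ?_
    calc h⁻¹ * ν.real (S j) ≤ h⁻¹ * (2 * I.toReal / m) := by
          gcongr
          exact hj2.trans (by gcongr)
      _ = 8 / α * I.toReal := by rw [hh]; field_simp; ring

lemma cv_assoc {n : ℕ} {f a b : En n → ℝ} (hf : LocallyIntegrable f volume)
    (ha : Continuous a) (hac : HasCompactSupport a) (hb : Continuous b)
    (hbc : HasCompactSupport b) (x : En n) :
    cv (cv f a) b x = cv (cv f b) a x := by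
  have key : ∀ (a b : En n → ℝ), Continuous a → HasCompactSupport a → Continuous b →
      HasCompactSupport b → cv (cv f a) b x = cv f (cv a b) x := by
    intro a b ha hac hb hbc
    rw [cv_eq, cv_eq, cv_eq f, cv_eq a b]
    refine convolution_assoc _ _ _ _ (fun x y z => by simp [mul_assoc])
      hf.aestronglyMeasurable ha.aestronglyMeasurable hb.aestronglyMeasurable
      (Eventually.of_forall fun y => hac.convolutionExists_right _ hf ha y)
      (Eventually.of_forall fun y => hbc.norm.convolutionExists_right _
        ha.norm.locallyIntegrable hb.norm y) ?_
    have hfn : LocallyIntegrable (fun x => ‖f x‖) volume := fun x => (hf x).norm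
    have han : LocallyIntegrable (fun x => ‖a x‖) volume := ha.norm.locallyIntegrable
    have c1 : HasCompactSupport (convolution (fun x => ‖a x‖) (fun x => ‖b x‖)
        (ContinuousLinearMap.mul ℝ ℝ) volume) := hac.norm.convolution _ hbc.norm
    have c2 : Continuous (convolution (fun x => ‖a x‖) (fun x => ‖b x‖)
        (ContinuousLinearMap.mul ℝ ℝ) volume) :=
      hbc.norm.continuous_convolution_right _ han hb.norm
    exact HasCompactSupport.convolutionExists_right _ c1 hfn c2 x
  have hcomm : cv a b = cv b a := by
    rw [cv_eq, cv_eq]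
    conv_lhs => rw [← convolution_flip]
    congr 1
    ext
    simp
  rw [key a b ha hac hb hbc, key b a hb hbc ha hac, hcomm]

lemma cv_L1 {n : ℕ} {f : En n → ℝ} {g : En n → En n} (h : MemW1p 1 f g) {ψ : En n → ℝ}
    (hψ : ContDiff ℝ (⊤ : ℕ∞) ψ) (hc : HasCompactSupport ψ) (h0 : ∀ x, 0 ≤ ψ x)
    (h1 : ∫ x, ψ x = 1) :
    ∫⁻ x, ‖fderiv ℝ (cv f ψ) x‖ₑ ≤ ∫⁻ x, ‖g x‖ₑ := by
  have hψ1 : ∫⁻ x, ‖ψ x‖ₑ = 1 := by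
    have := ofReal_integral_eq_lintegral_ofReal 
      (hψ.continuous.integrable_of_hasCompactSupport (μ := volume) hc) (Eventually.of_forall h0)
    rw [h1, ENNReal.ofReal_one] at this
    rw [this]
    exact lintegral_congr fun x => Real.enorm_of_nonneg (h0 x)
  calc _ ≤ ∫⁻ x, ∫⁻ t, ‖ψ (x - t)‖ₑ * ‖g t‖ₑ :=
        lintegral_mono fun x => cv_fderiv_enorm le_rfl h hψ hc x
    _ = ∫⁻ t, ∫⁻ x, ‖ψ (x - t)‖ₑ * ‖g t‖ₑ := by
        refine lintegral_lintegral_swap ?_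
        refine AEMeasurable.mul (f := fun q : En n × En n => ‖ψ (q.1 - q.2)‖ₑ)
          (g := fun q : En n × En n => ‖g q.2‖ₑ) ?_ ?_
        · have : Continuous fun q : En n × En n => ‖ψ (q.1 - q.2)‖ₑ :=
            (hψ.continuous.comp (continuous_fst.sub continuous_snd)).enorm
          exact this.measurable.aemeasurable
        · exact h.2.1.comp_snd.enorm
    _ = ∫⁻ t, ‖g t‖ₑ := by
        refine lintegral_congr fun t => ?_
        rw [lintegral_mul_const' _ _ enorm_ne_top,
          lintegral_sub_right_eq_self (fun x => ‖ψ x‖ₑ) t, hψ1, one_mul]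

lemma main_one {n : ℕ} (hn : 0 < n) :
    ∃ C : ℝ, 0 < C ∧ ∀ (f : En n → ℝ) (g : En n → En n), MemW1p 1 f g →
        ∀ α : ℝ, 0 < α → ∀ F, IsCompact F → F ⊆ ⋃ b, Vset f α b →
          capK 1 F ≤ ENNReal.ofReal (C / α ^ (1 : ℝ)) * ∫⁻ x, ‖g x‖ₑ ^ (1 : ℝ) := by
  obtain ⟨K, hK0, hK⟩ := st_deriv_bound
  obtain ⟨C, hC0, hC⟩ := boxing n
  refine ⟨C * (16 * 4 ^ n) * (1 + K * 8), by positivity, ?_⟩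
  intro f g h α hα F hF hFU
  simp only [Real.rpow_one, ENNReal.rpow_one]
  have hf := h.lif le_rfl
  obtain ⟨T, hT⟩ := hF.elim_finite_subcover _ (fun b => Vset_open hf α b) hFU
  rcases T.eq_empty_or_nonempty with rfl | hTn
  · have : F = ∅ := by simpa using hT
    rw [this, capK_empty one_pos]; simp
  have hT' : F ⊆ ⋃ b : T, Vset f α b := by
    intro x hx
    obtain ⟨b, hb, hxb⟩ := mem_iUnion₂.1 (hT hx)
    exact mem_iUnion.2 ⟨⟨b, hb⟩, hxb⟩
  obtain ⟨δ, hδ, hδF⟩ := lebesgue_number_lemma_of_metric hF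
    (fun b : T => Vset_open hf α b) hT'
  let ψ₀ : ContDiffBump (0 : En n) := ⟨δ / 2, δ, by positivity, by linarith⟩
  set ψ : En n → ℝ := ψ₀.normed volume with hψ
  have hψs : ContDiff ℝ (⊤ : ℕ∞) ψ := ψ₀.contDiff_normed
  have hψc : HasCompactSupport ψ := ψ₀.hasCompactSupport_normed
  have hψ0 : ∀ x, 0 ≤ ψ x := ψ₀.nonneg_normed
  have hψ1 : ∫ x, ψ x = 1 := ψ₀.integral_normed
  have hψb : ∀ x, δ ≤ ‖x‖ → ψ x = 0 := by
    intro x hx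
    have : x ∉ Function.support ψ := by
      rw [hψ, ψ₀.support_normed_eq]
      simpa using hx
    simpa using this
  set u := cv f ψ with hu
  have hus : ContDiff ℝ (⊤ : ℕ∞) u := cv_contDiff hf hψs hψc
  have hI : ∫⁻ x, ‖fderiv ℝ u x‖ₑ ≤ ∫⁻ x, ‖g x‖ₑ := cv_L1 h hψs hψc hψ0 hψ1
  have hg : ∫⁻ x, ‖g x‖ₑ ≠ ∞ := by
    have h5 : Integrable (fun x => ‖g x‖) := by simpa using h.2.2.2.2
    have := h5.2
    rw [hasFiniteIntegral_norm_iff] at this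
    exact this.ne
  have hlow : ∀ x ∈ F, ∃ b ∈ T, α * vb n b.rOut ≤ cv u b x := by
    intro x hx
    obtain ⟨⟨b, hb⟩, hsub⟩ := hδF x hx
    refine ⟨b, hb, ?_⟩
    have hcs := cv_contDiff hf b.contDiff b.hasCompactSupport
    rw [hu, cv_assoc hf hψs.continuous hψc b.continuous b.hasCompactSupport]
    have e1 : α * vb n b.rOut = ∫ t, α * vb n b.rOut * ψ (x - t) := by
      rw [integral_const_mul, integral_sub_left_eq_self ψ volume x, hψ1, mul_one]
    rw [e1]
    refine integral_mono ?_ ?_ ?_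
    · have := cv_integrable (f := fun _ : En n => α * vb n b.rOut)
        (continuous_const.locallyIntegrable (μ := volume)) hψs.continuous hψc x
      simpa [mul_comm] using this
    · have := cv_integrable (hcs.continuous.locallyIntegrable (μ := volume))
        hψs.continuous hψc x
      simpa [mul_comm] using this
    · intro t
      show _ * _ ≤ _ * _
      rcases le_or_gt δ ‖x - t‖ with ht | ht
      · rw [hψb _ ht]; simp
      · refine mul_le_mul_of_nonneg_right ?_ (hψ0 _)
        have : t ∈ Vset f α b := hsub (by rwa [mem_ball', dist_eq_norm])
        exact le_of_lt this
  have hM : volume {x | α / 4 < u x} ≠ ∞ := by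
    obtain ⟨R, hR⟩ := cv_decay le_rfl h hψs hψc (ε := α / 4) (by positivity)
    refine ((measure_mono (?_ : _ ⊆ closedBall (0 : En n) R)).trans_lt
      (isCompact_closedBall _ _).measure_lt_top).ne
    intro x hx
    have hx' : α / 4 < u x := hx
    rw [mem_closedBall, dist_zero_right]
    by_contra! hc
    have := (le_abs_self _).trans (hR x hc.le)
    linarith
  obtain ⟨b₀, hb₀, hmin⟩ := T.exists_min_image (fun b => vb n b.rOut) hTn
  obtain ⟨t, e, he, ht1, ht2, hvol, hen⟩ := band hus hα hM (ne_top_of_le_ne_top hg hI)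
    (ε := vb n b₀.rOut / 4) (by have := vb_pos (n := n) b₀.rOut_pos; positivity)
  set v : En n → ℝ := fun x => Real.smoothTransition ((u x - t) * e⁻¹) with hv
  have hvs : ContDiff ℝ (⊤ : ℕ∞) v := Real.smoothTransition.contDiff.comp
    ((hus.sub contDiff_const).mul contDiff_const)
  have hvI : ∫⁻ x, ‖fderiv ℝ v x‖ₑ ≤ ENNReal.ofReal (K * (8 / α)) * ∫⁻ x, ‖g x‖ₑ := by
    have hSm : MeasurableSet {x | t < u x ∧ u x < t + e} :=
      ((isOpen_lt continuous_const hus.continuous).inter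
        (isOpen_lt hus.continuous continuous_const)).measurableSet
    have hpt : ∀ x, ‖fderiv ℝ v x‖ₑ ≤ {x | t < u x ∧ u x < t + e}.indicator
        (fun x => ENNReal.ofReal (K * e⁻¹) * ‖fderiv ℝ u x‖ₑ) x := by
      intro x
      have hst := st_comp hK hus t e⁻¹ (by positivity) x
      by_cases hx : x ∈ {x | t < u x ∧ u x < t + e}
      · rw [indicator_of_mem hx, ← ofReal_norm, ← ofReal_norm,
          ← ENNReal.ofReal_mul (by positivity)]
        exact ENNReal.ofReal_le_ofReal hst.1
      · rw [indicator_of_notMem hx]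
        have : fderiv ℝ v x = 0 := by
          refine hst.2 ?_
          simp only [mem_setOf_eq, not_and_or, not_lt] at hx
          rcases hx with hx | hx
          · left
            exact mul_nonpos_of_nonpos_of_nonneg (by linarith) (by positivity)
          · right
            rw [← div_eq_mul_inv, le_div_iff₀ he]; linarith
        rw [this, enorm_eq_nnnorm]; simp
    calc _ ≤ _ := lintegral_mono hpt
      _ = ENNReal.ofReal K * (ENNReal.ofReal e⁻¹ *
            ∫⁻ x in {x | t < u x ∧ u x < t + e}, ‖fderiv ℝ u x‖ₑ) := by
          rw [lintegral_indicator hSm, lintegral_const_mul' _ _ ENNReal.ofReal_ne_top,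
            ENNReal.ofReal_mul hK0.le, mul_assoc]
      _ ≤ ENNReal.ofReal K * (ENNReal.ofReal (8 / α) * ∫⁻ x, ‖g x‖ₑ) :=
          mul_le_mul' le_rfl (hen.trans (mul_le_mul' le_rfl hI))
      _ = _ := by rw [ENNReal.ofReal_mul hK0.le, mul_assoc]
  set w : En n → ℝ≥0∞ := fun y => ENNReal.ofReal (16 * 4 ^ n) *
    (ENNReal.ofReal (1 / α) * ‖fderiv ℝ u y‖ₑ + ‖fderiv ℝ v y‖ₑ) with hw
  have hcap := hC w F hF ?_
  · refine hcap.trans ?_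
    have hm1 : Measurable fun y => ENNReal.ofReal (1 / α) * ‖fderiv ℝ u y‖ₑ :=
      ((hus.continuous_fderiv (by simp)).enorm.measurable).const_mul _
    calc ENNReal.ofReal C * ∫⁻ y, w y = ENNReal.ofReal C * (ENNReal.ofReal (16 * 4 ^ n) *
          (ENNReal.ofReal (1 / α) * (∫⁻ y, ‖fderiv ℝ u y‖ₑ) + ∫⁻ y, ‖fderiv ℝ v y‖ₑ)) := by
          rw [hw, lintegral_const_mul' _ _ ENNReal.ofReal_ne_top, lintegral_add_left hm1,
            lintegral_const_mul' _ _ ENNReal.ofReal_ne_top]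
      _ ≤ ENNReal.ofReal C * (ENNReal.ofReal (16 * 4 ^ n) *
          (ENNReal.ofReal (1 / α) * (∫⁻ y, ‖g y‖ₑ) +
            ENNReal.ofReal (K * (8 / α)) * ∫⁻ x, ‖g x‖ₑ)) := by gcongr
      _ = _ := by
          rw [← add_mul, ← ENNReal.ofReal_add (by positivity) (by positivity), ← mul_assoc,
            ← mul_assoc, ← ENNReal.ofReal_mul (by positivity), ← ENNReal.ofReal_mul (by positivity)]
          congr 2
          field_simp
  · intro x hx
    obtain ⟨b, hb, hxb⟩ := hlow x hx
    set B := closedBall x b.rOut with hB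
    have hBt : volume B ≠ ∞ := (isCompact_closedBall _ _).measure_lt_top.ne
    have hit : ∀ S : Set (En n), volume (S ∩ B) ≠ ∞ := fun S =>
      ((measure_mono inter_subset_right).trans_lt hBt.lt_top).ne
    rcases le_or_gt (volume.real B) (2 * volume.real ({y | u y ≤ α / 2} ∩ B)) with hA | hA
    · refine ⟨b.rOut, b.rOut_pos, (caseA hus b x hα hxb hA).trans ?_⟩
      have hr := b.rOut_pos
      calc _ ≤ ENNReal.ofReal (b.rOut * (16 * 4 ^ n) * (1 / α)) *
            ∫⁻ y in B, ‖fderiv ℝ u y‖ₑ := by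
            refine mul_le_mul' (ENNReal.ofReal_le_ofReal ?_) le_rfl
            have h24 : (2 : ℝ) ^ n ≤ 4 ^ n := by gcongr; norm_num
            calc _ = b.rOut * (8 * 2 ^ n) * (1 / α) := by field_simp; ring
              _ ≤ b.rOut * (16 * 4 ^ n) * (1 / α) := by gcongr; norm_num
        _ = ENNReal.ofReal b.rOut * ∫⁻ y in B, ENNReal.ofReal (16 * 4 ^ n) *
              (ENNReal.ofReal (1 / α) * ‖fderiv ℝ u y‖ₑ) := by
            rw [lintegral_const_mul' _ _ ENNReal.ofReal_ne_top,
              lintegral_const_mul' _ _ ENNReal.ofReal_ne_top,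
              ENNReal.ofReal_mul (by positivity), ENNReal.ofReal_mul hr.le]
            ring
        _ ≤ _ := by
            refine mul_le_mul' le_rfl (lintegral_mono fun y => ?_)
            exact mul_le_mul' le_rfl le_self_add
    · have hB2 : volume.real B < 2 * volume.real ({y | t + e ≤ u y} ∩ B) := by
        have hcov : B ⊆ ({y | u y ≤ α / 2} ∩ B) ∪ ({y | t + e ≤ u y} ∩ B) := by
          intro y hy
          rcases le_total (u y) (α / 2) with h1 | h1
          · exact Or.inl ⟨h1, hy⟩
          · exact Or.inr ⟨ht2.trans h1, hy⟩
        have e1 := measureReal_mono (μ := volume) hcov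
          (by simp only [ne_eq, measure_union_eq_top_iff, hit, or_self, not_false_eq_true])
        have e2 := measureReal_union_le (μ := volume) ({y | u y ≤ α / 2} ∩ B)
          ({y | t + e ≤ u y} ∩ B)
        linarith
      have hcB := caseB hn hvs (D := {y | t + e ≤ u y}) (Z := {y | u y ≤ t})
        (isClosed_le continuous_const hus.continuous).measurableSet
        (isClosed_le hus.continuous continuous_const).measurableSet
        ((measure_mono (fun y (hy : t + e ≤ u y) =>
          (show α / 4 < u y by linarith))).trans_lt hM.lt_top).ne
        (fun y (hy : t + e ≤ u y) => Real.smoothTransition.one_of_one_le (by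
          rw [← div_eq_mul_inv, le_div_iff₀ he]; linarith))
        (fun y (hy : u y ≤ t) => Real.smoothTransition.zero_of_nonpos
          (mul_nonpos_of_nonpos_of_nonneg (by linarith) (by positivity)))
        b.rOut_pos (by
          refine (measure_mono ?_).trans (hvol.trans (ENNReal.ofReal_le_ofReal ?_))
          · intro y hy
            simp only [mem_compl_iff, mem_union, mem_setOf_eq, not_or, not_le] at hy
            exact ⟨hy.2, hy.1⟩
          · have := hmin b hb
            linarith) x hB2
      obtain ⟨r, hr, hle⟩ := hcB
      refine ⟨r, hr, hle.trans ?_⟩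
      calc _ = ENNReal.ofReal r * ∫⁻ y in closedBall x r, ENNReal.ofReal (16 * 4 ^ n) *
              ‖fderiv ℝ v y‖ₑ := by
            rw [lintegral_const_mul' _ _ ENNReal.ofReal_ne_top, ENNReal.ofReal_mul (by positivity)]
            ring
        _ ≤ _ := by
            refine mul_le_mul' le_rfl (lintegral_mono fun y => ?_)
            exact mul_le_mul' le_rfl le_add_self

lemma mem_V {n : ℕ} (hn : 0 < n) {f : En n → ℝ} (hf : LocallyIntegrable f volume) {α : ℝ}
    (x : En n) {ρ : ℝ} (hρ : 0 < ρ) (hx : α < ballAvg f x ρ) : x ∈ ⋃ b, Vset f α b := by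
  have : Nonempty (Fin n) := ⟨⟨0, hn⟩⟩
  have hvol : volume.real (ball x ρ) = vb n ρ := by
    rw [measureReal_def, ← Measure.addHaar_closedBall_eq_addHaar_ball volume x ρ, ← vb_ofReal,
      ENNReal.toReal_ofReal (vb_pos hρ).le]
  have hx2 : α * vb n ρ < ∫ y in ball x ρ, f y := by
    rw [ballAvg, setAverage_eq, hvol, smul_eq_mul, inv_mul_eq_div, lt_div_iff₀ (vb_pos hρ)] at hx
    exact hx
  have hk : ∀ k : ℕ, (0 : ℝ) < 1 - 1 / ((k : ℝ) + 2) ∧ 1 - 1 / ((k : ℝ) + 2) < 1 := by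
    intro k
    have h2 : (0 : ℝ) < (k : ℝ) + 2 := by positivity
    constructor
    · rw [sub_pos, div_lt_one h2]
      have : (0 : ℝ) ≤ k := by positivity
      linarith
    · have : 0 < 1 / ((k : ℝ) + 2) := by positivity
      linarith
  let b : ℕ → ContDiffBump (0 : En n) := fun k =>
    ⟨ρ * (1 - 1 / ((k : ℝ) + 2)), ρ, mul_pos hρ (hk k).1, by nlinarith [(hk k).2]⟩
  have hlim : Tendsto (fun k => cv f (b k) x) atTop (𝓝 (∫ y in ball x ρ, f y)) := by
    rw [← integral_indicator measurableSet_ball]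
    have hfb : IntegrableOn f (ball x ρ) :=
      (hf.integrableOn_isCompact (isCompact_closedBall x ρ)).mono_set ball_subset_closedBall
    have hb0 : ∀ k t, t ∉ ball x ρ → b k (x - t) = 0 := by
      intro k t ht
      refine (b k).zero_of_le_dist ?_
      rw [dist_zero_right, ← dist_eq_norm, dist_comm]
      simpa using ht
    refine tendsto_integral_of_dominated_convergence ((ball x ρ).indicator fun y => ‖f y‖)
      ?_ (IntegrableOn.integrable_indicator hfb.norm measurableSet_ball) ?_ ?_
    · intro k
      have := (cv_integrable hf (b k).continuous (b k).hasCompactSupport x).1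
      simpa [mul_comm] using this
    · intro k
      refine Eventually.of_forall fun t => ?_
      by_cases ht : t ∈ ball x ρ
      · rw [indicator_of_mem ht, norm_mul, Real.norm_of_nonneg ((b k).nonneg)]
        exact mul_le_of_le_one_right (norm_nonneg _) (b k).le_one
      · rw [indicator_of_notMem ht, hb0 k t ht]; simp
    · refine Eventually.of_forall fun t => ?_
      by_cases ht : t ∈ ball x ρ
      · rw [indicator_of_mem ht]
        refine tendsto_const_nhds.congr' ?_
        have hT : Tendsto (fun k : ℕ => ρ * (1 - 1 / ((k : ℝ) + 2))) atTop (𝓝 (ρ * (1 - 0))) := by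
          refine (tendsto_const_nhds.sub ?_).const_mul ρ
          have := tendsto_one_div_atTop_nhds_zero_nat (𝕜 := ℝ)
          have h2 := this.comp (tendsto_add_atTop_nat 2)
          refine h2.congr fun k => ?_
          simp
        rw [sub_zero, mul_one] at hT
        filter_upwards [hT.eventually (lt_mem_nhds (mem_ball.1 ht))] with k hk'
        have : b k (x - t) = 1 := by
          refine (b k).one_of_mem_closedBall ?_
          rw [mem_closedBall, dist_zero_right, ← dist_eq_norm, dist_comm]
          exact hk'.le
        rw [this, mul_one]
      · rw [indicator_of_notMem ht]
        refine tendsto_const_nhds.congr fun k => ?_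
        rw [hb0 k t ht, mul_zero]
  obtain ⟨k, hk'⟩ := (hlim.eventually (lt_mem_nhds hx2)).exists
  exact mem_iUnion.2 ⟨b k, hk'⟩

lemma cap_of {n : ℕ} (hn : 0 < n) {p : ℝ} (hp : 1 ≤ p)
    (H : ∃ C : ℝ, 0 < C ∧ ∀ (f : En n → ℝ) (g : En n → En n), MemW1p p f g →
        ∀ α : ℝ, 0 < α → ∀ F, IsCompact F → F ⊆ ⋃ b, Vset f α b →
          capK p F ≤ ENNReal.ofReal (C / α ^ p) * ∫⁻ x, ‖g x‖ₑ ^ p) :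
    ∃ C : ℝ, 0 < C ∧
      ∀ (f : En n → ℝ) (g : En n → En n), MemW1p p f g →
        ∀ α : ℝ, 0 < α →
          cap p (Set.univ \ {x : En n | ∀ ρ : ℝ, 0 < ρ → ballAvg f x ρ ≤ α}) ≤
            ENNReal.ofReal (C / α ^ p) * ∫⁻ x, (‖g x‖₊ : ℝ≥0∞) ^ p := by
  obtain ⟨C, hC, H⟩ := H
  refine ⟨C, hC, fun f g h α hα => ?_⟩
  have hsub : Set.univ \ {x : En n | ∀ ρ : ℝ, 0 < ρ → ballAvg f x ρ ≤ α} ⊆ ⋃ b, Vset f α b := by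
    rintro x ⟨-, hx⟩
    have hx' : ¬ ∀ ρ : ℝ, 0 < ρ → ballAvg f x ρ ≤ α := hx
    push Not at hx'
    obtain ⟨ρ, hρ, hlt⟩ := hx'
    exact mem_V hn (h.lif hp) x hρ hlt
  have hop : IsOpen (⋃ b, Vset f α b) := isOpen_iUnion fun b => Vset_open (h.lif hp) α b
  refine (iInf₂_le (⋃ b, Vset f α b) ⟨hsub, hop⟩).trans ?_
  exact iSup₂_le fun F hF => H f g h α hα F hF.2 hF.1

/-- the Chebyshev type inequality for `p`-capacity. -/
theorem chebyshev_capacity {n : ℕ} (p : ℝ) (hp : 1 ≤ p) :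
    ∃ C : ℝ, 0 < C ∧
      ∀ (f : En n → ℝ) (g : En n → En n), MemW1p p f g →
        ∀ α : ℝ, 0 < α →
          cap p (Set.univ \ {x : En n | ∀ ρ : ℝ, 0 < ρ → ballAvg f x ρ ≤ α}) ≤
            ENNReal.ofReal (C / α ^ p) * ∫⁻ x, (‖g x‖₊ : ℝ≥0∞) ^ p := by
  rcases Nat.eq_zero_or_pos n with rfl | hn
  · refine ⟨1, one_pos, fun f g _ α _ => ?_⟩
    refine le_trans ?_ zero_le
    refine (iInf₂_le univ ⟨subset_univ _, isOpen_univ⟩).trans (iSup₂_le fun F _ => ?_)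
    refine (capK_le (φ := fun _ => 1) contDiff_const
      (HasCompactSupport.of_compactSpace _) (by simp)).trans ?_
    have : 0 < p := by linarith
    simp [this]
    left; rw [enorm_eq_nnnorm]; simp
  · rcases hp.eq_or_lt with rfl | hp1
    · exact cap_of hn le_rfl (main_one hn)
    · exact cap_of hn hp (main_gt hp1)
end
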